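/- arXiv:2503.01247 — 3 statements merged into one kernel-verified Lean document; each statement's English description precedes it below -/
import Mathlib

section
/- For all σ-structures A and B and every positive integer k, the following are equivalent: (i) A and B satisfy the same sentences of ⁺L^k; (ii) there exist objects Z, Z′ of EM(P_k^I) together with morphisms p : Z → F_k^I(A), q : Z → F_k^I(B), p′ : Z′ → F_k^I(B), q′ : Z′ → F_k^I(A) such that p and p′ are open pathwise embeddings and q and q′ are each a composition of a bijection followed by an open pathwise embedding. -/
/-- A relational vocabulary: a type of relation symbols together with their arities. -/
structure Vocab : Type 1 where
  Rel : Type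
  ar : Rel → ℕ

/-- A structure for the relational vocabulary `V` with carrier `α`. -/
structure Str (V : Vocab) (α : Type) : Type where
  rel : ∀ r : V.Rel, (Fin (V.ar r) → α) → Prop
/-- Positive formulas of the `k`-variable fragment `L^k` of the infinitary logic
`L_{∞,ω}(σ)`: formulas using only the variables `x_1, …, x_k`, with set-sized
conjunctions and disjunctions, both quantifiers, and no negation symbol. -/
inductive PLFml (V : Vocab) (k : ℕ) : Type 1
  | rel (r : V.Rel) (v : Fin (V.ar r) → Fin k) : PLFml V k
  | eq (i j : Fin k) : PLFml V k
  | iand (ι : Type) (f : ι → PLFml V k) : PLFml V k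
  | ior (ι : Type) (f : ι → PLFml V k) : PLFml V k
  | ex (i : Fin k) (φ : PLFml V k) : PLFml V k
  | all (i : Fin k) (φ : PLFml V k) : PLFml V k

namespace PLFml

/-- Free variables. -/
def freeVars {V : Vocab} {k : ℕ} : PLFml V k → Set (Fin k)
  | .rel _ v => Set.range v
  | .eq i j => {i, j}
  | .iand _ f => ⋃ x, freeVars (f x)
  | .ior _ f => ⋃ x, freeVars (f x)
  | .ex i φ => freeVars φ \ {i}
  | .all i φ => freeVars φ \ {i}

/-- Satisfaction, relative to a partial environment. -/
def Sat {V : Vocab} {k : ℕ} {α : Type} (M : Str V α) :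
    PLFml V k → (Fin k → Option α) → Prop
  | .rel r v, e => ∃ g : Fin (V.ar r) → α, (∀ i, e (v i) = some (g i)) ∧ M.rel r g
  | .eq i j, e => ∃ x : α, e i = some x ∧ e j = some x
  | .iand _ f, e => ∀ x, Sat M (f x) e
  | .ior _ f, e => ∃ x, Sat M (f x) e
  | .ex i φ, e => ∃ a : α, Sat M φ (Function.update e i (some a))
  | .all i φ, e => ∀ a : α, Sat M φ (Function.update e i (some a))

end PLFml
/-- An object datum for the Eilenberg–Moore category `EM(P_k^I)` of the pebbling comonad
over `σ^I = σ ∪ {I}`: a `σ`-structure with an interpretation `ieq` of the fresh binary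
relation symbol `I`, a (forest) order and a pebbling function. -/
structure PObj (V : Vocab) (k : ℕ) : Type 1 where
  carrier : Type
  rel : ∀ r : V.Rel, (Fin (V.ar r) → carrier) → Prop
  ieq : carrier → carrier → Prop
  le : carrier → carrier → Prop
  peb : carrier → Fin k

namespace PObj

variable {V : Vocab} {k : ℕ}

/-- Gaifman adjacency, with respect to all relations of `σ ∪ {I}`. -/
def Adj (X : PObj V k) (x y : X.carrier) : Prop :=
  x ≠ y ∧ ((∃ r v, X.rel r v ∧ (∃ i, v i = x) ∧ (∃ j, v j = y)) ∨ X.ieq x y ∨ X.ieq y x)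

/-- The covering relation of the order of `X`. -/
def Cover (X : PObj V k) (x y : X.carrier) : Prop :=
  X.le x y ∧ x ≠ y ∧ ∀ z, X.le x z → X.le z y → z = x ∨ z = y

/-- Roots, i.e. minimal elements of the forest order. -/
def IsRoot (X : PObj V k) (x : X.carrier) : Prop := ∀ y, X.le y x → y = x

/-- `X` is (the datum of) a coalgebra for `P_k^I`: a `k`-pebble forest-ordered
`σ^I`-structure. -/
def IsCoalg (X : PObj V k) : Prop :=
  (∀ x, X.le x x) ∧ (∀ x y z, X.le x y → X.le y z → X.le x z) ∧
  (∀ x y, X.le x y → X.le y x → x = y) ∧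
  (∀ x : X.carrier, {y | X.le y x}.Finite ∧
    ∀ y z, X.le y x → X.le z x → X.le y z ∨ X.le z y) ∧
  (∀ x y, X.Adj x y → X.le x y ∨ X.le y x) ∧
  (∀ x y, X.Adj x y → X.le x y → x ≠ y →
    ∀ z, X.le x z → x ≠ z → X.le z y → X.peb x ≠ X.peb z)

/-- Morphisms of `EM(P_k^I)`: homomorphisms of `σ^I`-structures that are forest
morphisms and preserve the pebbling functions. -/
def IsHom (X Y : PObj V k) (f : X.carrier → Y.carrier) : Prop :=
  (∀ r v, X.rel r v → Y.rel r fun i => f (v i)) ∧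
  (∀ x y, X.ieq x y → Y.ieq (f x) (f y)) ∧
  (∀ x, X.IsRoot x → Y.IsRoot (f x)) ∧
  (∀ x y, X.Cover x y → Y.Cover (f x) (f y)) ∧
  (∀ x, Y.peb (f x) = X.peb x)

/-- Embeddings: morphisms that are injective and reflect all relations. -/
def IsEmb (X Y : PObj V k) (f : X.carrier → Y.carrier) : Prop :=
  IsHom X Y f ∧ Function.Injective f ∧
  (∀ r v, (Y.rel r fun i => f (v i)) → X.rel r v) ∧
  (∀ x y, Y.ieq (f x) (f y) → X.ieq x y)

/-- Paths: objects whose forest order is finite and linear. -/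
def IsPath (X : PObj V k) : Prop :=
  Finite X.carrier ∧ ∀ x y : X.carrier, X.le x y ∨ X.le y x

/-- Pathwise embeddings. -/
def IsPWEmb (X Y : PObj V k) (f : X.carrier → Y.carrier) : Prop :=
  IsHom X Y f ∧ ∀ P : PObj V k, IsCoalg P → IsPath P →
    ∀ m : P.carrier → X.carrier, IsEmb P X m → IsEmb P Y fun p => f (m p)

/-- Open morphisms: every commutative square of path embeddings over `f` admits a
diagonal filler. -/
def IsOpen (X Y : PObj V k) (f : X.carrier → Y.carrier) : Prop :=
  ∀ P Q : PObj V k, IsCoalg P → IsPath P → IsCoalg Q → IsPath Q →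
    ∀ (i : P.carrier → Q.carrier) (m : P.carrier → X.carrier)
      (n : Q.carrier → Y.carrier),
      IsEmb P Q i → IsEmb P X m → IsEmb Q Y n → (∀ x, n (i x) = f (m x)) →
      ∃ d : Q.carrier → X.carrier, IsHom Q X d ∧ (∀ x, d (i x) = m x) ∧ ∀ q, f (d q) = n q

end PObj
/-- The co-free coalgebra `F_k^I(A)` for the pebbling comonad on `J(A)`: finite
non-empty sequences of moves `(p_i, a_i)`, ordered by the prefix order.  A tuple of
sequences is related iff the sequences are pairwise comparable, the pebble index of the
last move of a prefix does not reappear in the corresponding suffix, and the elements of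
the last moves are related in `J(A)`; the fresh relation `I` is interpreted accordingly,
with equality of the elements of the last moves. -/
def FP (V : Vocab) (k : ℕ) {α : Type} (A : Str V α) : PObj V k where
  carrier := {l : List (Fin k × α) // l ≠ []}
  rel r v :=
    (∀ i j, (v i).1 <+: (v j).1 ∨ (v j).1 <+: (v i).1) ∧
    (∀ i j w, (v j).1 = (v i).1 ++ w →
      ∀ m ∈ w, m.1 ≠ ((v i).1.getLast (v i).2).1) ∧
    A.rel r fun i => ((v i).1.getLast (v i).2).2
  ieq s t :=
    ((s.1 <+: t.1) ∨ (t.1 <+: s.1)) ∧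
    (∀ w, t.1 = s.1 ++ w → ∀ m ∈ w, m.1 ≠ (s.1.getLast s.2).1) ∧
    (∀ w, s.1 = t.1 ++ w → ∀ m ∈ w, m.1 ≠ (t.1.getLast t.2).1) ∧
    (s.1.getLast s.2).2 = (t.1.getLast t.2).2
  le s t := s.1 <+: t.1
  peb s := (s.1.getLast s.2).1
/-- `q : Z → Y` is the composition of a bijection followed by an open pathwise
embedding, in `EM(P_k^I)`. -/
def BijThenOpenP (V : Vocab) (k : ℕ) (Z Y : PObj V k)
    (q : Z.carrier → Y.carrier) : Prop :=
  ∃ W : PObj V k, PObj.IsCoalg W ∧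
    ∃ (u : Z.carrier → W.carrier) (v : W.carrier → Y.carrier),
      PObj.IsHom Z W u ∧ Function.Bijective u ∧
      PObj.IsPWEmb W Y v ∧ PObj.IsOpen W Y v ∧ ∀ z, q z = v (u z)

/-!
A position of a pebble forest is either an element, thought of as the play leading to it, or the
initial position preceding all moves. Morphisms of forests act on positions, and such a morphism
to a coalgebra is a pathwise embedding iff it preserves relations and reflects them along
branches; a pathwise embedding is open iff every step from the image of a position lifts. A
bijection also lifts steps, hence so do both legs of a span.

Given a span, each of its positions determines partial assignments of the variables in `A` and in
`B`. Induction on positive formulas shows that satisfaction passes from `A` to `B`: existential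
quantifiers use the lifting of steps along the left leg, universal quantifiers the lifting along
the right leg, and atomic formulas are reflected by the left leg and preserved by the right one.

Conversely, if all positive sentences are preserved, consider the plays choosing pairs of elements
of `A` and `B` such that positive types are preserved at every stage. Both projections of this
forest lift steps, because infinitary conjunctions and disjunctions express the absence of a
response. Equipping the forest with the relations pulled back from `F_k^I(A)`, respectively from
`F_k^I(B)`, makes each projection an open pathwise embedding, and the identity between these two
coalgebras is a homomorphism because positive atomic formulas are preserved.
-/

namespace PObj

variable {V : Vocab} {k : ℕ} {X Y Z : PObj V k}

/-! ### Forests and positions -/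

/-- The order of `X` is a forest order. -/
structure IsForest (X : PObj V k) : Prop where
  refl : ∀ x, X.le x x
  trans : ∀ {x y z}, X.le x y → X.le y z → X.le x z
  antisymm : ∀ {x y}, X.le x y → X.le y x → x = y
  finite_le : ∀ x, {y | X.le y x}.Finite
  total_of_le : ∀ {x y z}, X.le y x → X.le z x → X.le y z ∨ X.le z y

/-- The elements visited on the way to a position. A position of `X` is an element of
`Option X.carrier`: either an element of the forest or the initial position `none`, which acts
as a common root of all trees of the forest. -/
def below (X : PObj V k) : Option X.carrier → Set X.carrier
  | none => ∅
  | some x => {y | X.le y x}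

/-- `X.Step o y` says that `y` is an immediate successor of the position `o`, so that steps from
the initial position lead to the roots. -/
def Step (X : PObj V k) : Option X.carrier → X.carrier → Prop
  | none, y => X.IsRoot y
  | some x, y => X.Cover x y

namespace IsForest

theorem mem_below_self (hX : X.IsForest) (x : X.carrier) : x ∈ X.below (some x) :=
  hX.refl x

theorem mem_below_of_le (hX : X.IsForest) {x y : X.carrier} (h : X.le x y) :
    ∀ {o : Option X.carrier}, y ∈ X.below o → x ∈ X.below o
  | some _, hy => hX.trans h hy

theorem finite_below (hX : X.IsForest) : ∀ o : Option X.carrier, (X.below o).Finite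
  | none => Set.finite_empty
  | some x => hX.finite_le x

theorem total_of_mem_below (hX : X.IsForest) {x y : X.carrier} :
    ∀ {o : Option X.carrier}, x ∈ X.below o → y ∈ X.below o → X.le x y ∨ X.le y x
  | some _, hx, hy => hX.total_of_le hx hy

theorem below_injective (hX : X.IsForest) : Function.Injective X.below := by
  rintro (_ | x) (_ | y) h
  · rfl
  · have hy : y ∈ X.below none := h ▸ hX.mem_below_self y
    exact hy.elim
  · have hx : x ∈ X.below none := h ▸ hX.mem_below_self x
    exact hx.elim
  · have hxy : x ∈ X.below (some y) := h ▸ hX.mem_below_self x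
    have hyx : y ∈ X.below (some x) := h ▸ hX.mem_below_self y
    exact congrArg some (hX.antisymm hxy hyx)

theorem step_iff (hX : X.IsForest) {o : Option X.carrier} {y : X.carrier} :
    X.Step o y ↔ y ∉ X.below o ∧ X.below (some y) = insert y (X.below o) := by
  cases o with
  | none =>
    refine ⟨fun h => ⟨Set.notMem_empty y, Set.ext fun z => ⟨fun hz => Or.inl (h z hz), ?_⟩⟩,
      fun ⟨_, h⟩ z hz => ?_⟩
    · rintro (rfl | hz)
      exacts [hX.refl _, hz.elim]
    · have hz' : z ∈ insert y (X.below none) := h ▸ hz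
      exact hz'.resolve_right (Set.notMem_empty z)
  | some x =>
    constructor
    · rintro ⟨hxy, hne, hcov⟩
      refine ⟨fun hyx => hne (hX.antisymm hxy hyx), Set.ext fun z => ⟨fun hz => ?_, ?_⟩⟩
      · rcases hX.total_of_le hz hxy with hzx | hxz
        · exact Or.inr hzx
        · rcases hcov z hxz hz with rfl | rfl
          exacts [Or.inr (hX.refl z), Or.inl rfl]
      · rintro (rfl | hz)
        exacts [hX.refl _, hX.trans hz hxy]
    · rintro ⟨hyx, h⟩
      have hxy : x ∈ X.below (some y) := h ▸ Or.inr (hX.refl x)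
      refine ⟨hxy, fun e => hyx (e ▸ hX.refl x), fun z hxz hzy => ?_⟩
      have hz : z ∈ insert y (X.below (some x)) := h ▸ hzy
      exact hz.symm.imp_left fun hzx => hX.antisymm hzx hxz

theorem le_of_step (hX : X.IsForest) {x y : X.carrier} {o : Option X.carrier}
    (h : X.Step o y) (hx : x ∈ X.below o) : X.le x y := by
  have : x ∈ X.below (some y) := (hX.step_iff.1 h).2 ▸ Or.inr hx
  exact this

theorem eq_of_step_of_step (hX : X.IsForest) {o o' : Option X.carrier} {y : X.carrier}
    (h : X.Step o y) (h' : X.Step o' y) : o = o' := by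
  rw [hX.step_iff] at h h'
  apply hX.below_injective
  rw [← Set.insert_sdiff_self_of_notMem h.1, ← Set.insert_sdiff_self_of_notMem h'.1, ← h.2, ← h'.2]

theorem exists_top_of_chain (hX : X.IsForest) {S : Set X.carrier} (hfin : S.Finite)
    (hchain : ∀ x ∈ S, ∀ y ∈ S, X.le x y ∨ X.le y x) :
    ∃ o : Option X.carrier, S ⊆ X.below o ∧ ∀ x ∈ o, x ∈ S := by
  rcases S.eq_empty_or_nonempty with rfl | hne
  · exact ⟨none, Set.empty_subset _, by simp⟩
  · let _ : PartialOrder X.carrier :=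
      { le := X.le, le_refl := hX.refl, le_trans := fun _ _ _ => hX.trans
        le_antisymm := fun _ _ => hX.antisymm }
    obtain ⟨m, hm⟩ := hfin.exists_maximal hne
    refine ⟨some m, fun x hx => ?_, by simpa using hm.prop⟩
    exact (hchain x hx m hm.prop).elim id fun h => hm.le_of_ge hx h

theorem exists_step (hX : X.IsForest) (y : X.carrier) : ∃ o, X.Step o y := by
  obtain ⟨o, ho, hmem⟩ := hX.exists_top_of_chain (S := X.below (some y) \ {y})
    ((hX.finite_below _).subset Set.sdiff_subset)
    fun _ hz _ hw => hX.total_of_mem_below hz.1 hw.1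
  have hlt : ∀ z ∈ X.below o, X.le z y ∧ z ≠ y := by
    cases o with
    | none => simp [below]
    | some x =>
      obtain ⟨hxy, hne⟩ := hmem x rfl
      exact fun z hz => ⟨hX.trans hz hxy, fun e => hne (hX.antisymm hxy (e ▸ hz))⟩
  refine ⟨o, hX.step_iff.2 ⟨fun h => (hlt y h).2 rfl, Set.ext fun z => ⟨fun hz => ?_, ?_⟩⟩⟩
  · exact or_iff_not_imp_left.2 fun hne => ho ⟨hz, hne⟩
  · rintro (rfl | hz)
    exacts [hX.refl _, (hlt z hz).1]

theorem position_induction (hX : X.IsForest) {C : Option X.carrier → Prop} (initial : C none)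
    (step : ∀ o y, X.Step o y → C o → C (some y)) (o : Option X.carrier) : C o := by
  induction hn : (X.below o).ncard generalizing o with
  | zero =>
    cases o with
    | none => exact initial
    | some x =>
      rw [Set.ncard_eq_zero (hX.finite_below _)] at hn
      exact absurd (hX.mem_below_self x) (hn ▸ Set.notMem_empty x)
  | succ n ih =>
    cases o with
    | none => exact initial
    | some y =>
      obtain ⟨o, hstep⟩ := hX.exists_step y
      obtain ⟨hy, hbelow⟩ := hX.step_iff.1 hstep
      rw [hbelow, Set.ncard_insert_of_notMem hy (hX.finite_below o)] at hn
      exact step o y hstep (ih o (Nat.succ.inj hn))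

end IsForest

/-! ### Forest morphisms -/

/-- `f` is a morphism of pebbled forests: it preserves roots, covers and pebbles, but not
necessarily the relations. -/
structure IsForestMap (X Y : PObj V k) (f : X.carrier → Y.carrier) : Prop where
  step : ∀ {o y}, X.Step o y → Y.Step (o.map f) (f y)
  peb : ∀ x, Y.peb (f x) = X.peb x

/-- `f` has the back-and-forth property: every step from the image of a position lifts to a step
from that position. -/
def LiftsSteps (X Y : PObj V k) (f : X.carrier → Y.carrier) : Prop :=
  ∀ o t, Y.Step (o.map f) t → ∃ y, X.Step o y ∧ f y = t

theorem isHom_iff {f : X.carrier → Y.carrier} :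
    IsHom X Y f ↔ (∀ r v, X.rel r v → Y.rel r fun i => f (v i)) ∧
      (∀ x y, X.ieq x y → Y.ieq (f x) (f y)) ∧ IsForestMap X Y f := by
  constructor
  · rintro ⟨hrel, hieq, hroot, hcover, hpeb⟩
    refine ⟨hrel, hieq, fun {o y} h => ?_, hpeb⟩
    cases o with
    | none => exact hroot y h
    | some x => exact hcover x y h
  · rintro ⟨hrel, hieq, hf⟩
    exact ⟨hrel, hieq, fun x h => hf.step (o := none) h, fun x y h => hf.step (o := some x) h,
      hf.peb⟩

theorem IsHom.isForestMap {f : X.carrier → Y.carrier} (hf : IsHom X Y f) : IsForestMap X Y f :=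
  (isHom_iff.1 hf).2.2

theorem IsHom.comp {f : X.carrier → Y.carrier} {g : Y.carrier → Z.carrier}
    (hf : IsHom X Y f) (hg : IsHom Y Z g) : IsHom X Z fun x => g (f x) :=
  ⟨fun r v h => hg.1 r _ (hf.1 r v h), fun x y h => hg.2.1 _ _ (hf.2.1 x y h),
    fun x h => hg.2.2.1 _ (hf.2.2.1 x h), fun x y h => hg.2.2.2.1 _ _ (hf.2.2.2.1 x y h),
    fun x => (hg.2.2.2.2 _).trans (hf.2.2.2.2 x)⟩

namespace IsForestMap

variable {f : X.carrier → Y.carrier}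

theorem comp {g : Y.carrier → Z.carrier} (hg : IsForestMap Y Z g) (hf : IsForestMap X Y f) :
    IsForestMap X Z (g ∘ f) where
  step h := by
    rw [← Option.map_map]
    exact hg.step (hf.step h)
  peb x := (hg.peb _).trans (hf.peb x)

theorem image_below (hf : IsForestMap X Y f) (hX : X.IsForest) (hY : Y.IsForest)
    (o : Option X.carrier) : f '' X.below o = Y.below (o.map f) := by
  induction o using hX.position_induction with
  | initial => exact Set.image_empty f
  | step o y h ih =>
    rw [(hX.step_iff.1 h).2, Set.image_insert_eq, ih, ← (hY.step_iff.1 (hf.step h)).2,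
      Option.map_some]

theorem injOn_below (hf : IsForestMap X Y f) (hX : X.IsForest) (hY : Y.IsForest)
    (o : Option X.carrier) : Set.InjOn f (X.below o) := by
  induction o using hX.position_induction with
  | initial => exact Set.injOn_empty f
  | step o y h ih =>
    obtain ⟨hy, hbelow⟩ := hX.step_iff.1 h
    rw [hbelow, Set.injOn_insert hy, hf.image_below hX hY]
    exact ⟨ih, (hY.step_iff.1 (hf.step h)).1⟩

theorem map_mem_below (hf : IsForestMap X Y f) (hX : X.IsForest) (hY : Y.IsForest)
    {o : Option X.carrier} {x : X.carrier} (hx : x ∈ X.below o) : f x ∈ Y.below (o.map f) :=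
  hf.image_below hX hY o ▸ Set.mem_image_of_mem f hx

theorem monotone (hf : IsForestMap X Y f) (hX : X.IsForest) (hY : Y.IsForest) {x y : X.carrier}
    (h : X.le x y) : Y.le (f x) (f y) :=
  hf.map_mem_below hX hY (o := some y) h

theorem le_of_map_le (hf : IsForestMap X Y f) (hX : X.IsForest) (hY : Y.IsForest)
    {o : Option X.carrier} {x y : X.carrier} (hx : x ∈ X.below o) (hy : y ∈ X.below o)
    (h : Y.le (f x) (f y)) : X.le x y := by
  have : f x ∈ f '' X.below (some y) := by rwa [hf.image_below hX hY]
  obtain ⟨x', hx', he⟩ := this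
  rwa [← hf.injOn_below hX hY o (hX.mem_below_of_le hx' hy) hx he]

theorem of_comp {d : Z.carrier → X.carrier} (hf : IsForestMap X Y f) (hX : X.IsForest)
    (hY : Y.IsForest) (hZ : Z.IsForest) (hd : ∀ {x y}, Z.le x y → X.le (d x) (d y))
    (hfd : IsForestMap Z Y (f ∘ d)) : IsForestMap Z X d where
  peb x := (hf.peb (d x)).symm.trans (hfd.peb x)
  step := by
    intro o y h
    obtain ⟨o', h'⟩ := hX.exists_step (d y)
    have hmap : o'.map f = (o.map d).map f := by
      rw [Option.map_map]
      exact hY.eq_of_step_of_step (hf.step h') (hfd.step h)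
    suffices o' = o.map d from this ▸ h'
    match o', o, hmap with
    | none, none, _ => rfl
    | some x', some x, hmap =>
      have hx' : x' ∈ X.below (some (d y)) := hX.le_of_step h' (hX.mem_below_self x')
      have hx : d x ∈ X.below (some (d y)) := hd (hZ.le_of_step h (hZ.mem_below_self x))
      exact congrArg some (hf.injOn_below hX hY _ hx' hx (Option.some.inj hmap))

theorem liftsSteps_of_bijective (hf : IsForestMap X Y f) (hX : X.IsForest) (hY : Y.IsForest)
    (hbij : Function.Bijective f) : LiftsSteps X Y f := by
  intro o t ht
  obtain ⟨y, rfl⟩ := hbij.surjective t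
  obtain ⟨o', h⟩ := hX.exists_step y
  have ho : o' = o :=
    Option.map_injective hbij.injective (hY.eq_of_step_of_step (hf.step h) ht)
  exact ⟨y, ho ▸ h, rfl⟩

end IsForestMap

theorem LiftsSteps.comp {f : X.carrier → Y.carrier} {g : Y.carrier → Z.carrier}
    (hg : LiftsSteps Y Z g) (hf : LiftsSteps X Y f) : LiftsSteps X Z (g ∘ f) := by
  intro o t ht
  rw [← Option.map_map] at ht
  obtain ⟨y, hy, rfl⟩ := hg _ t ht
  obtain ⟨x, hx, rfl⟩ := hf o y hy
  exact ⟨x, hx, rfl⟩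

theorem LiftsSteps.exists_position_above {f : X.carrier → Y.carrier} (hl : LiftsSteps X Y f)
    (hX : X.IsForest) (hY : Y.IsForest) (o : Option X.carrier) (t : Option Y.carrier)
    (h : Y.below (o.map f) ⊆ Y.below t) :
    ∃ o' : Option X.carrier, o'.map f = t ∧ X.below o ⊆ X.below o' := by
  induction t using hY.position_induction with
  | initial =>
    refine ⟨o, hY.below_injective (Set.subset_empty_iff.1 h), subset_rfl⟩
  | step s y hstep ih =>
    obtain ⟨hy, hbelow⟩ := hY.step_iff.1 hstep
    by_cases hmem : y ∈ Y.below (o.map f)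
    · have heq : Y.below (o.map f) = Y.below (some y) :=
        h.antisymm fun z hz => hY.mem_below_of_le hz hmem
      exact ⟨o, hY.below_injective heq, subset_rfl⟩
    · obtain ⟨o', rfl, ho'⟩ := ih ((Set.subset_insert_iff_of_notMem hmem).1 (hbelow ▸ h))
      obtain ⟨x, hx, rfl⟩ := hl o' y hstep
      exact ⟨some x, rfl, fun z hz => hX.le_of_step hx (ho' hz)⟩

/-! ### Active pebbles -/

/-- At position `o`, the pebble placed in the move `x` has not been moved since. -/
def Active (X : PObj V k) (x : X.carrier) (o : Option X.carrier) : Prop :=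
  x ∈ X.below o ∧ ∀ z ∈ X.below o, X.le x z → X.peb z = X.peb x → z = x

/-- One of `x` and `y` is active at the other. This is what the axioms of a coalgebra demand of
related elements. -/
def Compat (X : PObj V k) (x y : X.carrier) : Prop :=
  X.Active x (some y) ∨ X.Active y (some x)

theorem IsForest.active_self (hX : X.IsForest) (x : X.carrier) : X.Active x (some x) :=
  ⟨hX.refl x, fun _ hz hxz _ => hX.antisymm hz hxz⟩

theorem Active.of_le (hX : X.IsForest) {x y : X.carrier} {o : Option X.carrier}
    (h : X.Active x o) (hxy : X.le x y) (hy : y ∈ X.below o) : X.Active x (some y) :=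
  ⟨hxy, fun z hz => h.2 z (hX.mem_below_of_le hz hy)⟩

theorem Active.compat (hX : X.IsForest) {x y : X.carrier} {o : Option X.carrier}
    (hx : X.Active x o) (hy : X.Active y o) : X.Compat x y :=
  (hX.total_of_mem_below hx.1 hy.1).imp (fun h => hx.of_le hX h hy.1)
    fun h => hy.of_le hX h hx.1

theorem Compat.symm {x y : X.carrier} (h : X.Compat x y) : X.Compat y x :=
  Or.symm h

theorem Compat.le_or_le {x y : X.carrier} (h : X.Compat x y) : X.le x y ∨ X.le y x :=
  h.imp And.left And.left

theorem Compat.active_of_le (hX : X.IsForest) {x y : X.carrier} (h : X.Compat x y)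
    (hxy : X.le x y) : X.Active x (some y) := by
  rcases h with h | h
  · exact h
  · rw [hX.antisymm hxy h.1]
    exact hX.active_self y

theorem Compat.exists_active (hX : X.IsForest) {x y : X.carrier} (h : X.Compat x y) :
    ∃ o, X.Active x o ∧ X.Active y o :=
  h.elim (fun h => ⟨some y, h, hX.active_self y⟩) fun h => ⟨some x, hX.active_self x, h⟩

theorem IsForest.active_some_iff (hX : X.IsForest) {x y : X.carrier} {o : Option X.carrier}
    (h : X.Step o y) :
    X.Active x (some y) ↔ x = y ∨ X.Active x o ∧ X.peb x ≠ X.peb y := by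
  obtain ⟨hy, hbelow⟩ := hX.step_iff.1 h
  constructor
  · rintro ⟨hx, hlast⟩
    rw [hbelow] at hx hlast
    refine hx.imp_right fun hxo => ⟨⟨hxo, fun z hz => hlast z (Or.inr hz)⟩, fun hpeb => hy ?_⟩
    rwa [hlast y (Or.inl rfl) (hX.le_of_step h hxo) hpeb.symm]
  · rintro (rfl | ⟨⟨hxo, hlast⟩, hpeb⟩)
    · exact hX.active_self x
    · refine ⟨hX.le_of_step h hxo, fun z hz hxz hzx => ?_⟩
      rw [hbelow] at hz
      rcases hz with rfl | hz
      · exact absurd hzx.symm hpeb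
      · exact hlast z hz hxz hzx

theorem IsForest.exists_forall_active (hX : X.IsForest) {ι : Type*} [Finite ι]
    {v : ι → X.carrier} (h : ∀ i j, X.Compat (v i) (v j)) : ∃ o, ∀ i, X.Active (v i) o := by
  obtain ⟨o, hv, hmem⟩ := hX.exists_top_of_chain (Set.finite_range v) (by
    rintro _ ⟨i, rfl⟩ _ ⟨j, rfl⟩
    exact (h i j).le_or_le)
  refine ⟨o, fun i => ?_⟩
  have hi : v i ∈ X.below o := hv ⟨i, rfl⟩
  match o, hmem, hi with
  | some x, hmem, hi =>
    obtain ⟨j, rfl⟩ := hmem x rfl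
    exact (h i j).active_of_le hX hi

section

variable {f : X.carrier → Y.carrier} {x y : X.carrier} {o : Option X.carrier}

theorem IsForestMap.active_map_iff (hf : IsForestMap X Y f) (hX : X.IsForest) (hY : Y.IsForest)
    (hx : x ∈ X.below o) : Y.Active (f x) (o.map f) ↔ X.Active x o := by
  have hinj := hf.injOn_below hX hY o
  constructor
  · rintro ⟨-, hlast⟩
    refine ⟨hx, fun z hz hxz hpeb => hinj hz hx (hlast _ (hf.map_mem_below hX hY hz) ?_ ?_)⟩
    · exact hf.monotone hX hY hxz
    · rw [hf.peb, hf.peb, hpeb]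
  · rintro ⟨-, hlast⟩
    refine ⟨hf.map_mem_below hX hY hx, ?_⟩
    rw [← hf.image_below hX hY]
    rintro _ ⟨z, hz, rfl⟩ hxz hpeb
    rw [hf.peb, hf.peb] at hpeb
    rw [hlast z hz (hf.le_of_map_le hX hY hx hz hxz) hpeb]

theorem IsForestMap.active_map (hf : IsForestMap X Y f) (hX : X.IsForest) (hY : Y.IsForest)
    (h : X.Active x o) : Y.Active (f x) (o.map f) :=
  (hf.active_map_iff hX hY h.1).2 h

theorem IsForestMap.compat_map (hf : IsForestMap X Y f) (hX : X.IsForest) (hY : Y.IsForest)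
    (h : X.Compat x y) : Y.Compat (f x) (f y) :=
  h.imp (hf.active_map hX hY) (hf.active_map hX hY)

theorem IsForestMap.compat_of_map (hf : IsForestMap X Y f) (hX : X.IsForest) (hY : Y.IsForest)
    (hx : x ∈ X.below o) (hy : y ∈ X.below o) (h : Y.Compat (f x) (f y)) : X.Compat x y :=
  h.imp (fun h => (hf.active_map_iff hX hY (hf.le_of_map_le hX hY hx hy h.1)).1 h)
    fun h => (hf.active_map_iff hX hY (hf.le_of_map_le hX hY hy hx h.1)).1 h

end

theorem isCoalg_iff :
    X.IsCoalg ↔ X.IsForest ∧ (∀ r v, X.rel r v → ∀ i j, X.Compat (v i) (v j)) ∧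
      ∀ x y, X.ieq x y → X.Compat x y := by
  constructor
  · rintro ⟨hrefl, htrans, hantisymm, hdown, hcomp, hpeb⟩
    have hX : X.IsForest := ⟨hrefl, htrans _ _ _, hantisymm _ _, fun x => (hdown x).1,
      (hdown _).2 _ _⟩
    have hactive : ∀ x y, X.Adj x y → X.le x y → X.Active x (some y) := fun x y hadj hxy =>
      ⟨hxy, fun z hzy hxz hz => by_contra fun hne =>
        hpeb x y hadj hxy hadj.1 z hxz (Ne.symm hne) hzy hz.symm⟩
    have hcompat : ∀ x y, (x ≠ y → X.Adj x y ∧ X.Adj y x) → X.Compat x y := by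
      intro x y hadj
      by_cases hxy : x = y
      · exact hxy ▸ Or.inl (hX.active_self x)
      · obtain ⟨hadj, hadj'⟩ := hadj hxy
        exact (hcomp x y hadj).imp (hactive x y hadj) (hactive y x hadj')
    refine ⟨hX, fun r v h i j => hcompat _ _ fun hne => ?_, fun x y h => hcompat _ _ fun hne => ?_⟩
    · exact ⟨⟨hne, Or.inl ⟨r, v, h, ⟨i, rfl⟩, ⟨j, rfl⟩⟩⟩,
        ⟨hne.symm, Or.inl ⟨r, v, h, ⟨j, rfl⟩, ⟨i, rfl⟩⟩⟩⟩
    · exact ⟨⟨hne, Or.inr (Or.inl h)⟩, ⟨hne.symm, Or.inr (Or.inr h)⟩⟩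
  · rintro ⟨hX, hrel, hieq⟩
    have hcompat : ∀ x y, X.Adj x y → X.Compat x y := by
      rintro _ _ ⟨-, ⟨r, v, h, ⟨i, rfl⟩, ⟨j, rfl⟩⟩ | h | h⟩
      exacts [hrel r v h i j, hieq _ _ h, (hieq _ _ h).symm]
    refine ⟨hX.refl, fun _ _ _ => hX.trans, fun _ _ => hX.antisymm,
      fun x => ⟨hX.finite_le x, fun _ _ => hX.total_of_le⟩,
      fun x y h => (hcompat x y h).le_or_le, fun x y h hxy _ z hxz hne hzy hpeb => hne ?_⟩
    exact (((hcompat x y h).active_of_le hX hxy).2 z hzy hxz hpeb.symm).symm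

theorem IsCoalg.isForest (hX : X.IsCoalg) : X.IsForest :=
  (isCoalg_iff.1 hX).1

/-! ### Induced substructures -/

/-- The substructure of `X` induced on `S`. -/
def sub (X : PObj V k) (S : Set X.carrier) : PObj V k where
  carrier := S
  rel r v := X.rel r fun i => (v i).1
  ieq x y := X.ieq x.1 y.1
  le x y := X.le x.1 y.1
  peb x := X.peb x.1

theorem IsForest.sub (hX : X.IsForest) (S : Set X.carrier) : (X.sub S).IsForest where
  refl x := hX.refl x.1
  trans := hX.trans
  antisymm h h' := Subtype.ext (hX.antisymm h h')
  finite_le x := (hX.finite_le x.1).preimage Subtype.val_injective.injOn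
  total_of_le := hX.total_of_le

theorem Compat.sub {S : Set X.carrier} {x y : S} (h : X.Compat x.1 y.1) :
    (X.sub S).Compat x y :=
  h.imp (fun h => ⟨h.1, fun z hz hxz hpeb => Subtype.ext (h.2 z.1 hz hxz hpeb)⟩)
    fun h => ⟨h.1, fun z hz hyz hpeb => Subtype.ext (h.2 z.1 hz hyz hpeb)⟩

theorem IsCoalg.sub (hX : X.IsCoalg) (S : Set X.carrier) : (X.sub S).IsCoalg := by
  obtain ⟨hforest, hrel, hieq⟩ := isCoalg_iff.1 hX
  exact isCoalg_iff.2 ⟨hforest.sub S, fun r v h i j => (hrel r _ h i j).sub,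
    fun x y h => (hieq _ _ h).sub⟩

section

variable {S : Set X.carrier}

theorem sub_step_iff (hS : ∀ x y, X.le x y → y ∈ S → x ∈ S) {o : Option (X.sub S).carrier}
    {y : (X.sub S).carrier} : (X.sub S).Step o y ↔ X.Step (o.map Subtype.val) y.1 := by
  cases o with
  | none =>
    exact ⟨fun h z hz => congrArg Subtype.val (h ⟨z, hS _ _ hz y.2⟩ hz),
      fun h z hz => Subtype.ext (h z.1 hz)⟩
  | some x =>
    refine and_congr Iff.rfl (and_congr (not_congr Subtype.ext_iff) ⟨fun h z hxz hzy => ?_,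
      fun h z hxz hzy => (h z.1 hxz hzy).imp Subtype.ext Subtype.ext⟩)
    exact (h ⟨z, hS _ _ hzy y.2⟩ hxz hzy).imp (congrArg Subtype.val) (congrArg Subtype.val)

theorem isForestMap_val (hS : ∀ x y, X.le x y → y ∈ S → x ∈ S) :
    IsForestMap (X.sub S) X Subtype.val where
  step h := (sub_step_iff hS).1 h
  peb _ := rfl

theorem isEmb_val (hS : ∀ x y, X.le x y → y ∈ S → x ∈ S) : IsEmb (X.sub S) X Subtype.val :=
  ⟨isHom_iff.2 ⟨fun _ _ h => h, fun _ _ h => h, isForestMap_val hS⟩, Subtype.val_injective,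
    fun _ _ h => h, fun _ _ h => h⟩

end

theorem IsForest.isPath_sub_below (hX : X.IsForest) (o : Option X.carrier) :
    (X.sub (X.below o)).IsPath :=
  ⟨hX.finite_below o, fun x y => hX.total_of_mem_below x.2 y.2⟩

theorem IsForest.isEmb_sub_below (hX : X.IsForest) (o : Option X.carrier) :
    IsEmb (X.sub (X.below o)) X Subtype.val :=
  isEmb_val fun _ _ h => hX.mem_below_of_le h

theorem IsPath.exists_top (hp : X.IsPath) (hX : X.IsForest) :
    ∃ o : Option X.carrier, ∀ x, x ∈ X.below o := by
  have := hp.1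
  obtain ⟨o, ho, -⟩ := hX.exists_top_of_chain Set.finite_univ fun x _ y _ => hp.2 x y
  exact ⟨o, fun x => ho (Set.mem_univ x)⟩

/-! ### Open pathwise embeddings -/

/-- `f` reflects the relations between elements lying on a common branch. -/
structure ReflectsBelow (X Y : PObj V k) (f : X.carrier → Y.carrier) : Prop where
  rel : ∀ {o r v}, (∀ i, v i ∈ X.below o) → (Y.rel r fun i => f (v i)) → X.rel r v
  ieq : ∀ {o x y}, x ∈ X.below o → y ∈ X.below o → Y.ieq (f x) (f y) → X.ieq x y

theorem IsPWEmb.isForestMap {f : X.carrier → Y.carrier} (hf : IsPWEmb X Y f) :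
    IsForestMap X Y f :=
  hf.1.isForestMap

theorem IsPWEmb.reflectsBelow {f : X.carrier → Y.carrier} (hX : X.IsCoalg)
    (hf : IsPWEmb X Y f) : ReflectsBelow X Y f := by
  have hemb := fun o => hf.2 _ (hX.sub _) (hX.isForest.isPath_sub_below o) _
    (hX.isForest.isEmb_sub_below o)
  exact ⟨fun {o r v} hv h => (hemb o).2.2.1 r (fun i => ⟨v i, hv i⟩) h,
    fun {o x y} hx hy h => (hemb o).2.2.2 ⟨x, hx⟩ ⟨y, hy⟩ h⟩

theorem ReflectsBelow.isPWEmb {f : X.carrier → Y.carrier} (hr : ReflectsBelow X Y f)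
    (hX : X.IsForest) (hY : Y.IsForest) (hf : IsHom X Y f) : IsPWEmb X Y f := by
  refine ⟨hf, fun P hP hPpath m hm => ?_⟩
  obtain ⟨o, ho⟩ := hPpath.exists_top hP.isForest
  have hm_below : ∀ x, m x ∈ X.below (o.map m) := fun x =>
    hm.1.isForestMap.map_mem_below hP.isForest hX (ho x)
  exact ⟨hm.1.comp hf,
    fun x y h => hm.2.1 (hf.isForestMap.injOn_below hX hY _ (hm_below x) (hm_below y) h),
    fun r v h => hm.2.2.1 r v (hr.rel (fun i => hm_below (v i)) h),
    fun x y h => hm.2.2.2 x y (hr.ieq (hm_below x) (hm_below y) h)⟩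

theorem IsEmb.codRestrict {m : X.carrier → Y.carrier} (hX : X.IsForest) (hY : Y.IsForest)
    (hm : IsEmb X Y m) {S : Set Y.carrier} (hS : ∀ x y, Y.le x y → y ∈ S → x ∈ S)
    (hmem : ∀ x, m x ∈ S) : IsEmb X (Y.sub S) fun x => ⟨m x, hmem x⟩ :=
  ⟨isHom_iff.2 ⟨hm.1.1, hm.1.2.1, (isForestMap_val hS).of_comp (hY.sub S) hY hX
      (hm.1.isForestMap.monotone hX hY) hm.1.isForestMap⟩,
    fun _ _ h => hm.2.1 (congrArg Subtype.val h), hm.2.2.1, hm.2.2.2⟩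

theorem IsPWEmb.liftsSteps {f : X.carrier → Y.carrier} (hf : IsPWEmb X Y f) (hX : X.IsCoalg)
    (hY : Y.IsCoalg) (hopen : IsOpen X Y f) : LiftsSteps X Y f := by
  intro o t ht
  have hmem : ∀ z : X.below o, f z.1 ∈ Y.below (some t) := fun z =>
    hY.isForest.le_of_step ht (hf.isForestMap.map_mem_below hX.isForest hY.isForest z.2)
  have hinc := hX.isForest.isEmb_sub_below o
  have hcod := (hf.2 _ (hX.sub _) (hX.isForest.isPath_sub_below o) _ hinc).codRestrict
    (hX.isForest.sub _) hY.isForest (fun _ _ h => hY.isForest.mem_below_of_le h) hmem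
  obtain ⟨d, hd, hdm, hfd⟩ := hopen _ _ (hX.sub _) (hX.isForest.isPath_sub_below o) (hY.sub _)
    (hY.isForest.isPath_sub_below (some t)) _ _ _ hcod hinc (hY.isForest.isEmb_sub_below _)
    fun _ => rfl
  let top : Y.below (some t) := ⟨t, hY.isForest.mem_below_self t⟩
  obtain ⟨o', ho'⟩ := (hY.isForest.sub (Y.below (some t))).exists_step top
  have hmap : o'.map Subtype.val = o.map f := hY.isForest.eq_of_step_of_step
    ((hY.isForest.isEmb_sub_below (some t)).1.isForestMap.step ho') ht
  have hdo : o'.map d = o := by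
    match o', o, hmap with
    | none, none, _ => rfl
    | some q, some x, hmap =>
      have hq : q = ⟨f x, hmem ⟨x, hX.isForest.refl x⟩⟩ := Subtype.ext (Option.some.inj hmap)
      exact congrArg some (hq ▸ hdm ⟨x, hX.isForest.refl x⟩)
  exact ⟨d top, hdo ▸ hd.isForestMap.step ho', hfd top⟩

theorem IsPWEmb.exists_lift_of_mem_below {f : X.carrier → Y.carrier} (hf : IsPWEmb X Y f)
    (hX : X.IsCoalg) (hY : Y.IsForest) {Q : PObj V k} (hQ : Q.IsForest) {n : Q.carrier → Y.carrier}
    (hn : IsHom Q Y n) {o : Option X.carrier} (hmem : ∀ q, n q ∈ Y.below (o.map f)) :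
    ∃ d : Q.carrier → X.carrier, IsHom Q X d ∧ (∀ q, d q ∈ X.below o) ∧ ∀ q, f (d q) = n q := by
  have hfm := hf.isForestMap
  have hrefl := hf.reflectsBelow hX
  simp only [← hfm.image_below hX.isForest hY] at hmem
  choose d hdo hfd using hmem
  obtain rfl : f ∘ d = n := funext hfd
  have hmono : ∀ {x y}, Q.le x y → X.le (d x) (d y) := fun h =>
    hfm.le_of_map_le hX.isForest hY (hdo _) (hdo _) (hn.isForestMap.monotone hQ hY h)
  exact ⟨d, isHom_iff.2 ⟨fun r v h => hrefl.rel (fun i => hdo (v i)) (hn.1 r v h),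
    fun x y h => hrefl.ieq (hdo x) (hdo y) (hn.2.1 x y h),
    hfm.of_comp hX.isForest hY hQ hmono hn.isForestMap⟩, hdo, hfd⟩

theorem IsPWEmb.isOpen {f : X.carrier → Y.carrier} (hf : IsPWEmb X Y f) (hX : X.IsCoalg)
    (hY : Y.IsForest) (hl : LiftsSteps X Y f) : IsOpen X Y f := by
  intro P Q hP hPpath hQ hQpath i m n _ hm hn hcomm
  have hfm := hf.isForestMap
  obtain ⟨oP, hoP⟩ := hPpath.exists_top hP.isForest
  obtain ⟨oQ, hoQ⟩ := hQpath.exists_top hQ.isForest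
  have hnQ : ∀ q, n q ∈ Y.below (oQ.map n) := fun q =>
    hn.1.isForestMap.map_mem_below hQ.isForest hY (hoQ q)
  have hmP : ∀ x, m x ∈ X.below (oP.map m) := fun x =>
    hm.1.isForestMap.map_mem_below hP.isForest hX.isForest (hoP x)
  have hbelow : Y.below ((oP.map m).map f) ⊆ Y.below (oQ.map n) := by
    rw [Option.map_map, ← (hfm.comp hm.1.isForestMap).image_below hP.isForest hY]
    rintro _ ⟨x, -, rfl⟩
    rw [Function.comp_apply, ← hcomm x]
    exact hnQ (i x)
  obtain ⟨o, ho, hPo⟩ := hl.exists_position_above hX.isForest hY _ _ hbelow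
  obtain ⟨d, hd, hdo, hfd⟩ := hf.exists_lift_of_mem_below hX hY hQ.isForest hn.1
    fun q => ho ▸ hnQ q
  refine ⟨d, hd, fun x => ?_, hfd⟩
  exact hfm.injOn_below hX.isForest hY o (hdo _) (hPo (hmP x)) ((hfd _).trans (hcomm x))

/-! ### Pulling relations back along a forest morphism -/

/-- The forest `X` with the largest relations that make it a coalgebra and `f` a homomorphism
to `Y`. -/
def pullback (X Y : PObj V k) (f : X.carrier → Y.carrier) : PObj V k where
  carrier := X.carrier
  rel r v := (∀ i j, X.Compat (v i) (v j)) ∧ Y.rel r fun i => f (v i)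
  ieq x y := X.Compat x y ∧ Y.ieq (f x) (f y)
  le := X.le
  peb := X.peb

theorem mem_pullback_below {f : X.carrier → Y.carrier} {o : Option X.carrier} {x : X.carrier} :
    x ∈ (X.pullback Y f).below o ↔ x ∈ X.below o := by
  cases o <;> exact Iff.rfl

theorem pullback_step {f : X.carrier → Y.carrier} {o : Option X.carrier} {y : X.carrier} :
    (X.pullback Y f).Step o y ↔ X.Step o y := by
  cases o <;> exact Iff.rfl

theorem IsForest.isCoalg_pullback (hX : X.IsForest) (f : X.carrier → Y.carrier) :
    (X.pullback Y f).IsCoalg :=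
  isCoalg_iff.2 ⟨⟨hX.refl, hX.trans, hX.antisymm, hX.finite_le, hX.total_of_le⟩,
    fun _ _ h => h.1, fun _ _ h => h.1⟩

theorem IsForestMap.isPWEmb_pullback {f : X.carrier → Y.carrier} (hf : IsForestMap X Y f)
    (hX : X.IsForest) (hY : Y.IsCoalg) : IsPWEmb (X.pullback Y f) Y f := by
  obtain ⟨hYforest, hrel, hieq⟩ := isCoalg_iff.1 hY
  have hrefl : ReflectsBelow (X.pullback Y f) Y f :=
    ⟨fun hv h => ⟨fun i j => hf.compat_of_map hX hYforest (mem_pullback_below.1 (hv i))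
        (mem_pullback_below.1 (hv j)) (hrel _ _ h i j), h⟩,
      fun hx hy h => ⟨hf.compat_of_map hX hYforest (mem_pullback_below.1 hx)
        (mem_pullback_below.1 hy) (hieq _ _ h), h⟩⟩
  exact hrefl.isPWEmb (hX.isCoalg_pullback f).isForest hYforest
    (isHom_iff.2 ⟨fun _ _ h => h.2, fun _ _ h => h.2,
      fun h => hf.step (pullback_step.1 h), hf.peb⟩)

theorem LiftsSteps.isOpen_pullback {f : X.carrier → Y.carrier} (hl : LiftsSteps X Y f)
    (hf : IsForestMap X Y f) (hX : X.IsForest) (hY : Y.IsCoalg) :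
    IsOpen (X.pullback Y f) Y f :=
  (hf.isPWEmb_pullback hX hY).isOpen (hX.isCoalg_pullback f) hY.isForest fun o t ht =>
    (hl o t ht).imp fun _ h => ⟨pullback_step.2 h.1, h.2⟩


/-! ### The cofree coalgebra -/

section Cofree

variable {α : Type} {A : Str V α}

/-- The counit of the pebbling comonad: the element chosen in the last move of a play. -/
def counit (s : (FP V k A).carrier) : α :=
  (s.1.getLast s.2).2

/-- The sequence of moves leading to a position of `F_k^I(A)`. -/
def moves : Option (FP V k A).carrier → List (Fin k × α)
  | none => []
  | some s => s.1

/-- The assignment of elements to pebbles at a position of `F_k^I(A)`, which is `none` at the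
pebbles that have not been placed yet. -/
def assignment (o : Option (FP V k A).carrier) : Fin k → Option α :=
  (moves o).foldl (fun e m => Function.update e m.1 (some m.2)) fun _ => none

theorem exists_moves_eq (l : List (Fin k × α)) :
    ∃ o : Option (FP V k A).carrier, moves o = l :=
  if h : l = [] then ⟨none, h.symm⟩ else ⟨some ⟨l, h⟩, rfl⟩

theorem mem_FP_below {s : (FP V k A).carrier} {o : Option (FP V k A).carrier} :
    s ∈ (FP V k A).below o ↔ s.1 <+: moves o := by
  cases o with
  | none => exact ⟨False.elim, fun h => s.2 (List.prefix_nil.1 h)⟩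
  | some t => exact Iff.rfl

theorem isForest_FP (A : Str V α) : (FP V k A).IsForest where
  refl _ := List.prefix_rfl
  trans := List.IsPrefix.trans
  antisymm h h' := Subtype.ext (h.eq_of_length_le h'.length_le)
  finite_le s := ((List.finite_toSet s.1.inits).preimage Subtype.val_injective.injOn).subset
    fun _ h => (List.mem_inits _ _).2 h
  total_of_le := List.prefix_or_prefix_of_prefix

theorem FP_step_iff {o : Option (FP V k A).carrier} {t : (FP V k A).carrier} :
    (FP V k A).Step o t ↔ t.1 = moves o ++ [((FP V k A).peb t, counit t)] := by
  have step_of_eq : ∀ o, t.1 = moves o ++ [((FP V k A).peb t, counit t)] →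
      (FP V k A).Step o t := by
    intro o h
    refine (isForest_FP A).step_iff.2 ⟨fun ht => ?_, Set.ext fun s => ?_⟩
    · have := (mem_FP_below.1 ht).length_le
      simp [h] at this
    · have hst : s = t ↔ s.1 = moves o ++ [((FP V k A).peb t, counit t)] :=
        ⟨fun e => e ▸ h, fun e => Subtype.ext (e.trans h.symm)⟩
      rw [Set.mem_insert_iff, mem_FP_below, mem_FP_below, hst, ← List.prefix_concat_iff, ← h]
      rfl
  refine ⟨fun h => ?_, step_of_eq o⟩
  obtain ⟨o', ho'⟩ := exists_moves_eq (A := A) t.1.dropLast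
  have ht : t.1 = moves o' ++ [((FP V k A).peb t, counit t)] := by
    rw [ho']
    exact (List.dropLast_append_getLast t.2).symm
  rwa [(isForest_FP A).eq_of_step_of_step h (step_of_eq o' ht)]

theorem FP_exists_step (o : Option (FP V k A).carrier) (i : Fin k) (a : α) :
    ∃ t, (FP V k A).Step o t ∧ (FP V k A).peb t = i ∧ counit t = a := by
  have hlast : (moves o ++ [(i, a)]).getLast (by simp) = (i, a) := List.getLast_concat
  refine ⟨⟨moves o ++ [(i, a)], by simp⟩, FP_step_iff.2 ?_, congrArg Prod.fst hlast,
    congrArg Prod.snd hlast⟩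
  exact congrArg (fun m => moves o ++ [m]) hlast.symm

theorem FP_step_ext {o : Option (FP V k A).carrier} {s t : (FP V k A).carrier}
    (hs : (FP V k A).Step o s) (ht : (FP V k A).Step o t)
    (hpeb : (FP V k A).peb s = (FP V k A).peb t) (hcounit : counit s = counit t) : s = t := by
  rw [FP_step_iff] at hs ht
  exact Subtype.ext (by rw [hs, ht, hpeb, hcounit])

theorem FP_active_iff {s t : (FP V k A).carrier} :
    (FP V k A).Active s (some t) ↔
      s.1 <+: t.1 ∧ ∀ w, t.1 = s.1 ++ w → ∀ m ∈ w, m.1 ≠ (FP V k A).peb s := by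
  refine and_congr Iff.rfl ⟨fun hlast w hw m hm hpeb => ?_, fun h z hzt hsz hpeb => ?_⟩
  · obtain ⟨u, v, rfl⟩ := List.append_of_mem hm
    let z : (FP V k A).carrier := ⟨s.1 ++ u ++ [m], by simp⟩
    have hz : z = s := by
      refine hlast z ⟨v, by simp [z, hw]⟩ ⟨u ++ [m], by simp [z]⟩ ?_
      exact (congrArg Prod.fst List.getLast_concat).trans hpeb
    simpa [z] using congrArg (fun x => x.1.length) hz
  · obtain ⟨w, hw⟩ := hsz
    obtain ⟨w', hw'⟩ := hzt
    rcases eq_or_ne w [] with rfl | hne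
    · exact Subtype.ext (by simpa using hw.symm)
    · have hlast : (FP V k A).peb z = (w.getLast hne).1 := by
        simp only [FP, ← hw, List.getLast_append_of_ne_nil _ hne]
      refine absurd (hlast.symm.trans hpeb) (h (w ++ w') ?_ _ ?_)
      · rw [← hw', ← hw, List.append_assoc]
      · exact List.mem_append_left _ (List.getLast_mem hne)

theorem FP_compat_iff {s t : (FP V k A).carrier} :
    (FP V k A).Compat s t ↔ (s.1 <+: t.1 ∨ t.1 <+: s.1) ∧
      (∀ w, t.1 = s.1 ++ w → ∀ m ∈ w, m.1 ≠ (FP V k A).peb s) ∧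
      ∀ w, s.1 = t.1 ++ w → ∀ m ∈ w, m.1 ≠ (FP V k A).peb t := by
  refine ⟨fun h => ⟨h.le_or_le, fun w hw => ?_, fun w hw => ?_⟩, ?_⟩
  · exact (FP_active_iff.1 (h.active_of_le (isForest_FP A) ⟨w, hw.symm⟩)).2 w hw
  · exact (FP_active_iff.1 (h.symm.active_of_le (isForest_FP A) ⟨w, hw.symm⟩)).2 w hw
  · rintro ⟨h | h, hst, hts⟩
    exacts [Or.inl (FP_active_iff.2 ⟨h, hst⟩), Or.inr (FP_active_iff.2 ⟨h, hts⟩)]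

theorem FP_rel_iff {r : V.Rel} {v : Fin (V.ar r) → (FP V k A).carrier} :
    (FP V k A).rel r v ↔
      (∀ i j, (FP V k A).Compat (v i) (v j)) ∧ A.rel r fun i => counit (v i) := by
  simp only [FP_compat_iff]
  exact ⟨fun ⟨hle, hpeb, h⟩ => ⟨fun i j => ⟨hle i j, hpeb i j, hpeb j i⟩, h⟩,
    fun ⟨hcompat, h⟩ => ⟨fun i j => (hcompat i j).1, fun i j => (hcompat i j).2.1, h⟩⟩

theorem FP_ieq_iff {s t : (FP V k A).carrier} :
    (FP V k A).ieq s t ↔ (FP V k A).Compat s t ∧ counit s = counit t := by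
  rw [FP_compat_iff, and_assoc, and_assoc]
  rfl

theorem isCoalg_FP (A : Str V α) : (FP V k A).IsCoalg :=
  isCoalg_iff.2 ⟨isForest_FP A, fun _ _ h => (FP_rel_iff.1 h).1, fun _ _ h => (FP_ieq_iff.1 h).1⟩

theorem assignment_some {o : Option (FP V k A).carrier} {t : (FP V k A).carrier}
    (h : (FP V k A).Step o t) : assignment (some t) =
      Function.update (assignment o) ((FP V k A).peb t) (some (counit t)) := by
  have ht : moves (some t) = moves o ++ [((FP V k A).peb t, counit t)] := FP_step_iff.1 h
  rw [assignment, ht, List.foldl_concat]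
  rfl

theorem assignment_map_eq_some_iff {p : X.carrier → (FP V k A).carrier} (hX : X.IsForest)
    (hp : IsForestMap X (FP V k A) p) (o : Option X.carrier) {i : Fin k} {a : α} :
    assignment (o.map p) i = some a ↔
      ∃ x, X.Active x o ∧ X.peb x = i ∧ counit (p x) = a := by
  induction o using hX.position_induction with
  | initial => exact ⟨nofun, fun ⟨_, h, _⟩ => h.1.elim⟩
  | step o y h ih =>
    rw [Option.map_some, assignment_some (hp.step h), hp.peb]
    simp only [hX.active_some_iff h]
    rcases eq_or_ne i (X.peb y) with rfl | hne
    · rw [Function.update_self]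
      constructor
      · exact fun ha => ⟨y, Or.inl rfl, rfl, Option.some.inj ha⟩
      · rintro ⟨x, rfl | ⟨-, hne⟩, hpeb, rfl⟩
        exacts [rfl, absurd hpeb hne]
    · rw [Function.update_of_ne hne, ih]
      constructor
      · rintro ⟨x, hx, rfl, ha⟩
        exact ⟨x, Or.inr ⟨hx, hne⟩, rfl, ha⟩
      · rintro ⟨x, rfl | ⟨hx, -⟩, rfl, ha⟩
        exacts [absurd rfl hne, ⟨x, hx, rfl, ha⟩]

theorem Active.assignment_eq {p : X.carrier → (FP V k A).carrier} {x : X.carrier}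
    {o : Option X.carrier} (h : X.Active x o) (hX : X.IsForest)
    (hp : IsForestMap X (FP V k A) p) :
    assignment (o.map p) (X.peb x) = some (counit (p x)) :=
  (assignment_map_eq_some_iff hX hp o).2 ⟨x, h, rfl, rfl⟩

end Cofree

/-! ### From spans to preservation of positive formulas -/

section Spans

variable {α β : Type} {A : Str V α} {B : Str V β}

/-- A span exhibiting that the positive `k`-variable theory of `A` is contained in that of `B`:
an open pathwise embedding to `F_k^I(A)` and a bijection followed by an open pathwise embedding
to `F_k^I(B)`. -/
def HasSpan (k : ℕ) (A : Str V α) (B : Str V β) : Prop :=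
  ∃ Z : PObj V k, IsCoalg Z ∧
    ∃ (p : Z.carrier → (FP V k A).carrier) (q : Z.carrier → (FP V k B).carrier),
      IsPWEmb Z (FP V k A) p ∧ IsOpen Z (FP V k A) p ∧ BijThenOpenP V k Z (FP V k B) q

theorem isHom_of_bijThenOpenP {q : Z.carrier → Y.carrier} (h : BijThenOpenP V k Z Y q) :
    IsHom Z Y q := by
  obtain ⟨W, _, u, v, hu, _, hv, _, hq⟩ := h
  rw [funext hq]
  exact hu.comp hv.1

theorem liftsSteps_of_bijThenOpenP {q : Z.carrier → Y.carrier} (h : BijThenOpenP V k Z Y q)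
    (hZ : Z.IsForest) (hY : Y.IsCoalg) : LiftsSteps Z Y q := by
  obtain ⟨W, hW, u, v, hu, hbij, hv, hopen, hq⟩ := h
  rw [funext hq]
  exact (hv.liftsSteps hW hY hopen).comp
    (hu.isForestMap.liftsSteps_of_bijective hZ hW.isForest hbij)

section

variable {p : Z.carrier → (FP V k A).carrier} {q : Z.carrier → (FP V k B).carrier}

theorem LiftsSteps.exists_step_of_counit (hl : LiftsSteps Z (FP V k A) p)
    (hp : IsForestMap Z (FP V k A) p) (o : Option Z.carrier) (i : Fin k) (a : α) :
    ∃ z, Z.Step o z ∧ Z.peb z = i ∧ counit (p z) = a := by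
  obtain ⟨t, ht, rfl, rfl⟩ := FP_exists_step (o.map p) i a
  obtain ⟨z, hz, rfl⟩ := hl o t ht
  exact ⟨z, hz, (hp.peb z).symm, rfl⟩

theorem sat_rel_of_span (hZ : Z.IsForest) (hp : IsForestMap Z (FP V k A) p)
    (hrefl : ReflectsBelow Z (FP V k A) p) (hq : IsHom Z (FP V k B) q) {r : V.Rel}
    {v : Fin (V.ar r) → Fin k} {o : Option Z.carrier}
    (h : (PLFml.rel r v).Sat A (assignment (o.map p))) :
    (PLFml.rel r v).Sat B (assignment (o.map q)) := by
  obtain ⟨g, hg, hA⟩ := h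
  simp only [assignment_map_eq_some_iff hZ hp] at hg
  choose z hactive hpeb hcounit using hg
  have hcompat : ∀ i j, (FP V k A).Compat (p (z i)) (p (z j)) := fun i j =>
    hp.compat_map hZ (isForest_FP A) ((hactive i).compat hZ (hactive j))
  have hrel : Z.rel r z := by
    refine hrefl.rel (fun i => (hactive i).1) (FP_rel_iff.2 ⟨hcompat, ?_⟩)
    simpa only [hcounit] using hA
  refine ⟨fun i => counit (q (z i)), fun i => ?_, (FP_rel_iff.1 (hq.1 r z hrel)).2⟩
  rw [← hpeb i]
  exact (hactive i).assignment_eq hZ hq.isForestMap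

theorem sat_eq_of_span (hZ : Z.IsForest) (hp : IsForestMap Z (FP V k A) p)
    (hrefl : ReflectsBelow Z (FP V k A) p) (hq : IsHom Z (FP V k B) q) {i j : Fin k}
    {o : Option Z.carrier} (h : (PLFml.eq i j).Sat A (assignment (o.map p))) :
    (PLFml.eq i j : PLFml V k).Sat B (assignment (o.map q)) := by
  obtain ⟨a, hi, hj⟩ := h
  obtain ⟨x, hx, rfl, hxa⟩ := (assignment_map_eq_some_iff hZ hp o).1 hi
  obtain ⟨y, hy, rfl, hya⟩ := (assignment_map_eq_some_iff hZ hp o).1 hj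
  have hcompat := hp.compat_map hZ (isForest_FP A) (hx.compat hZ hy)
  have hieq : Z.ieq x y := hrefl.ieq hx.1 hy.1 (FP_ieq_iff.2 ⟨hcompat, hxa.trans hya.symm⟩)
  refine ⟨counit (q x), hx.assignment_eq hZ hq.isForestMap, ?_⟩
  rw [(FP_ieq_iff.1 (hq.2.1 x y hieq)).2]
  exact hy.assignment_eq hZ hq.isForestMap

theorem sat_of_span (hZ : Z.IsForest) (hp : IsForestMap Z (FP V k A) p)
    (hrefl : ReflectsBelow Z (FP V k A) p) (hpl : LiftsSteps Z (FP V k A) p)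
    (hq : IsHom Z (FP V k B) q) (hql : LiftsSteps Z (FP V k B) q) (φ : PLFml V k) :
    ∀ o : Option Z.carrier, φ.Sat A (assignment (o.map p)) → φ.Sat B (assignment (o.map q)) := by
  have hqm := hq.isForestMap
  have hupdate : ∀ {o z}, Z.Step o z →
      assignment (some (p z)) =
          Function.update (assignment (o.map p)) (Z.peb z) (some (counit (p z))) ∧
        assignment (some (q z)) =
          Function.update (assignment (o.map q)) (Z.peb z) (some (counit (q z))) := fun hz =>
    ⟨hp.peb _ ▸ assignment_some (hp.step hz), hqm.peb _ ▸ assignment_some (hqm.step hz)⟩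
  induction φ with
  | rel r v => exact fun o => sat_rel_of_span hZ hp hrefl hq
  | eq i j => exact fun o => sat_eq_of_span hZ hp hrefl hq
  | iand ι f ih => exact fun o h x => ih x o (h x)
  | ior ι f ih => exact fun o ⟨x, h⟩ => ⟨x, ih x o h⟩
  | ex i φ ih =>
    rintro o ⟨a, h⟩
    obtain ⟨z, hz, rfl, rfl⟩ := hpl.exists_step_of_counit hp o i a
    rw [← (hupdate hz).1] at h
    exact ⟨counit (q z), (hupdate hz).2 ▸ ih (some z) h⟩
  | all i φ ih =>
    intro o h b
    obtain ⟨z, hz, rfl, rfl⟩ := hql.exists_step_of_counit hqm o i b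
    rw [← (hupdate hz).2]
    exact ih (some z) ((hupdate hz).1 ▸ h (counit (p z)))

end

theorem HasSpan.sat (h : HasSpan k A B) {φ : PLFml V k} (hφ : φ.Sat A fun _ => none) :
    φ.Sat B fun _ => none := by
  obtain ⟨Z, hZ, p, q, hp, hopen, hq⟩ := h
  exact sat_of_span hZ.isForest hp.isForestMap (hp.reflectsBelow hZ)
    (hp.liftsSteps hZ (isCoalg_FP A) hopen) (isHom_of_bijThenOpenP hq)
    (liftsSteps_of_bijThenOpenP hq hZ.isForest (isCoalg_FP B)) φ none hφ

end Spans

/-! ### From preservation of positive formulas to spans -/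

section PositiveTypes

variable {α β : Type} {A : Str V α} {B : Str V β}

/-- Positive types are preserved from `(A, e)` to `(B, e')`. Only formulas whose free variables
have a value under `e` are considered, so that at the empty assignments this is about sentences. -/
def PosTypeLE (A : Str V α) (B : Str V β) (e : Fin k → Option α) (e' : Fin k → Option β) : Prop :=
  ∀ φ : PLFml V k, φ.freeVars ⊆ {i | e i ≠ none} → φ.Sat A e → φ.Sat B e'

theorem sdiff_subset_of_subset_update {e : Fin k → Option α} {i : Fin k} {a : α}
    {S : Set (Fin k)} (h : S ⊆ {j | Function.update e i (some a) j ≠ none}) :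
    S \ {i} ⊆ {j | e j ≠ none} := by
  rintro j ⟨hj, hji⟩
  have hne : Function.update e i (some a) j ≠ none := h hj
  rwa [Function.update_of_ne hji] at hne

namespace PosTypeLE

variable {e : Fin k → Option α} {e' : Fin k → Option β}

-- If no `b` works, the conjunction of the failing formulas `φ b` is satisfied by `a` in `A` but
-- by nothing in `B`.
theorem forth (h : PosTypeLE A B e e') (i : Fin k) (a : α) :
    ∃ b, PosTypeLE A B (Function.update e i (some a)) (Function.update e' i (some b)) := by
  by_contra hc
  simp only [PosTypeLE, not_exists, not_forall] at hc
  choose φ hfree hA hB using hc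
  have hfree_ex : (PLFml.ex i (.iand β φ)).freeVars ⊆ {j | e j ≠ none} :=
    sdiff_subset_of_subset_update (Set.iUnion_subset hfree)
  obtain ⟨b, hb⟩ := h _ hfree_ex ⟨a, hA⟩
  exact hB b (hb b)

theorem back (h : PosTypeLE A B e e') (i : Fin k) (b : β) :
    ∃ a, PosTypeLE A B (Function.update e i (some a)) (Function.update e' i (some b)) := by
  by_contra hc
  simp only [PosTypeLE, not_exists, not_forall] at hc
  choose φ hfree hA hB using hc
  have hfree_all : (PLFml.all i (.ior α φ)).freeVars ⊆ {j | e j ≠ none} := by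
    rw [PLFml.freeVars, PLFml.freeVars, Set.iUnion_sdiff]
    exact Set.iUnion_subset fun a => sdiff_subset_of_subset_update (hfree a)
  obtain ⟨a, ha⟩ := h _ hfree_all (fun a => ⟨a, hA a⟩) b
  exact hB a ha

theorem rel_of_rel (h : PosTypeLE A B e e') {r : V.Rel} {v : Fin (V.ar r) → Fin k}
    {g : Fin (V.ar r) → α} {g' : Fin (V.ar r) → β} (hg : ∀ i, e (v i) = some (g i))
    (hg' : ∀ i, e' (v i) = some (g' i)) (hA : A.rel r g) : B.rel r g' := by
  have hfree : (PLFml.rel r v).freeVars ⊆ {i | e i ≠ none} := by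
    rintro _ ⟨i, rfl⟩
    exact ne_of_eq_of_ne (hg i) (Option.some_ne_none _)
  obtain ⟨g'', hg'', hB⟩ := h _ hfree ⟨g, hg, hA⟩
  rwa [funext fun i => Option.some.inj ((hg' i).symm.trans (hg'' i))]

theorem eq_of_eq (h : PosTypeLE A B e e') {i j : Fin k} {a : α} {b b' : β} (hi : e i = some a)
    (hj : e j = some a) (hi' : e' i = some b) (hj' : e' j = some b') : b = b' := by
  have hfree : (PLFml.eq i j : PLFml V k).freeVars ⊆ {i | e i ≠ none} := by
    rintro _ (rfl | rfl)
    exacts [ne_of_eq_of_ne hi (Option.some_ne_none _), ne_of_eq_of_ne hj (Option.some_ne_none _)]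
  obtain ⟨c, hc, hc'⟩ := h _ hfree ⟨a, hi, hj⟩
  exact Option.some.inj ((hi'.symm.trans hc).trans (hc'.symm.trans hj'))

end PosTypeLE

section

variable {p : X.carrier → (FP V k A).carrier} {q : X.carrier → (FP V k B).carrier}

theorem isHom_pullback_of_posTypeLE (hX : X.IsForest) (hp : IsForestMap X (FP V k A) p)
    (hq : IsForestMap X (FP V k B) q)
    (h : ∀ o : Option X.carrier, PosTypeLE A B (assignment (o.map p)) (assignment (o.map q))) :
    IsHom (X.pullback (FP V k A) p) (X.pullback (FP V k B) q) id := by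
  refine ⟨fun r v hv => ?_, fun x y hxy => ?_, fun _ h => h, fun _ _ h => h, fun _ => rfl⟩
  · obtain ⟨hcompat, hrel⟩ := hv
    obtain ⟨o, ho⟩ := hX.exists_forall_active hcompat
    refine ⟨hcompat, FP_rel_iff.2
      ⟨fun i j => hq.compat_map hX (isForest_FP B) (hcompat i j), ?_⟩⟩
    exact (h o).rel_of_rel (fun i => (ho i).assignment_eq hX hp)
      (fun i => (ho i).assignment_eq hX hq) (FP_rel_iff.1 hrel).2
  · obtain ⟨hcompat, hieq⟩ := hxy
    obtain ⟨o, hx, hy⟩ := Compat.exists_active hX hcompat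
    refine ⟨hcompat, FP_ieq_iff.2 ⟨hq.compat_map hX (isForest_FP B) hcompat, ?_⟩⟩
    refine (h o).eq_of_eq (hx.assignment_eq hX hp) ?_ (hx.assignment_eq hX hq)
      (hy.assignment_eq hX hq)
    rw [(FP_ieq_iff.1 hieq).2]
    exact hy.assignment_eq hX hp

theorem hasSpan_of_posTypeLE (hX : X.IsForest) (hp : IsForestMap X (FP V k A) p)
    (hq : IsForestMap X (FP V k B) q) (hpl : LiftsSteps X (FP V k A) p)
    (hql : LiftsSteps X (FP V k B) q)
    (h : ∀ o : Option X.carrier, PosTypeLE A B (assignment (o.map p)) (assignment (o.map q))) :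
    HasSpan k A B :=
  ⟨X.pullback (FP V k A) p, hX.isCoalg_pullback p, p, q, hp.isPWEmb_pullback hX (isCoalg_FP A),
    hpl.isOpen_pullback hp hX (isCoalg_FP A), X.pullback (FP V k B) q, hX.isCoalg_pullback q, id, q,
    isHom_pullback_of_posTypeLE hX hp hq h, Function.bijective_id,
    hq.isPWEmb_pullback hX (isCoalg_FP B), hql.isOpen_pullback hq hX (isCoalg_FP B), fun _ => rfl⟩

end

/-- The map `F_k^I(C) → F_k^I(A)` applying `π` to the elements chosen in a play. -/
def mapMoves {γ : Type} (C : Str V γ) (A : Str V α) (π : γ → α) (s : (FP V k C).carrier) :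
    (FP V k A).carrier :=
  ⟨s.1.map (Prod.map id π), List.map_eq_nil_iff.not.2 s.2⟩

section

variable {γ : Type} {C : Str V γ} {π : γ → α}

theorem getLast_mapMoves (s : (FP V k C).carrier) :
    (mapMoves C A π s).1.getLast (mapMoves C A π s).2 = Prod.map id π (s.1.getLast s.2) :=
  List.getLast_map _

theorem peb_mapMoves (s : (FP V k C).carrier) :
    (FP V k A).peb (mapMoves C A π s) = (FP V k C).peb s :=
  congrArg Prod.fst (getLast_mapMoves s)

theorem counit_mapMoves (s : (FP V k C).carrier) : counit (mapMoves C A π s) = π (counit s) :=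
  congrArg Prod.snd (getLast_mapMoves s)

theorem isForestMap_mapMoves : IsForestMap (FP V k C) (FP V k A) (mapMoves C A π) where
  peb := peb_mapMoves
  step {o t} h := by
    have hmoves : moves (o.map (mapMoves C A π)) = (moves o).map (Prod.map id π) := by
      cases o <;> rfl
    have ht : (mapMoves C A π t).1 =
        (moves o ++ [((FP V k C).peb t, counit t)]).map (Prod.map id π) :=
      congrArg (List.map _) (FP_step_iff.1 h)
    rw [FP_step_iff, hmoves, counit_mapMoves, peb_mapMoves, ht, List.map_append]
    rfl

theorem assignment_mapMoves {o : Option (FP V k C).carrier} {t : (FP V k C).carrier}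
    (h : (FP V k C).Step o t) : assignment (some (mapMoves C A π t)) =
      Function.update (assignment (o.map (mapMoves C A π))) ((FP V k C).peb t)
        (some (π (counit t))) := by
  rw [assignment_some (isForestMap_mapMoves.step h), peb_mapMoves, counit_mapMoves]

end

/-- The structure on `γ` with empty relations. -/
def emptyStr (V : Vocab) (γ : Type) : Str V γ :=
  ⟨fun _ _ => False⟩

/-- The plays in which elements of `A` and `B` are chosen simultaneously and positive types are
preserved from `A` to `B` at every stage. -/
def winningPlays (k : ℕ) (A : Str V α) (B : Str V β) :
    Set (FP V k (emptyStr V (α × β))).carrier :=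
  {s | ∀ t, (FP V k _).le t s → PosTypeLE A B (assignment (some (mapMoves _ A Prod.fst t)))
    (assignment (some (mapMoves _ B Prod.snd t)))}

theorem mem_winningPlays_of_le (s t : (FP V k (emptyStr V (α × β))).carrier)
    (h : (FP V k _).le s t) (ht : t ∈ winningPlays k A B) : s ∈ winningPlays k A B :=
  fun r hr => ht r ((isForest_FP _).trans hr h)

/-- The forest of winning plays. Its relations are immaterial: only `pullback`s of it are used. -/
def winningForest (k : ℕ) (A : Str V α) (B : Str V β) : PObj V k :=
  (FP V k (emptyStr V (α × β))).sub (winningPlays k A B)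

namespace winningForest

theorem isForest (k : ℕ) (A : Str V α) (B : Str V β) : (winningForest k A B).IsForest :=
  (isForest_FP _).sub _

/-- The projection of a play to its moves in `A`. -/
def left (s : (winningForest k A B).carrier) : (FP V k A).carrier :=
  mapMoves _ A Prod.fst s.1

/-- The projection of a play to its moves in `B`. -/
def right (s : (winningForest k A B).carrier) : (FP V k B).carrier :=
  mapMoves _ B Prod.snd s.1

theorem isForestMap_left : IsForestMap (winningForest k A B) (FP V k A) left :=
  isForestMap_mapMoves.comp (isForestMap_val mem_winningPlays_of_le)

theorem isForestMap_right : IsForestMap (winningForest k A B) (FP V k B) right :=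
  isForestMap_mapMoves.comp (isForestMap_val mem_winningPlays_of_le)

theorem posTypeLE (h : PosTypeLE A B (fun _ : Fin k => none) fun _ => none) :
    ∀ o : Option (winningForest k A B).carrier,
      PosTypeLE A B (assignment (o.map left)) (assignment (o.map right))
  | none => h
  | some s => s.2 s.1 ((isForest_FP _).refl _)

theorem exists_step {o : Option (winningForest k A B).carrier} {i : Fin k} {a : α} {b : β}
    (h : PosTypeLE A B (Function.update (assignment (o.map left)) i (some a))
      (Function.update (assignment (o.map right)) i (some b))) :
    ∃ y, (winningForest k A B).Step o y ∧ (winningForest k A B).peb y = i ∧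
      counit (left y) = a ∧ counit (right y) = b := by
  obtain ⟨t, ht, rfl, hab⟩ :=
    FP_exists_step (A := emptyStr V (α × β)) (o.map Subtype.val) i (a, b)
  have hleft : assignment (some (mapMoves _ A Prod.fst t)) =
      Function.update (assignment (o.map left)) ((FP V k _).peb t) (some a) :=
    (assignment_mapMoves ht).trans (by rw [hab]; cases o <;> rfl)
  have hright : assignment (some (mapMoves _ B Prod.snd t)) =
      Function.update (assignment (o.map right)) ((FP V k _).peb t) (some b) :=
    (assignment_mapMoves ht).trans (by rw [hab]; cases o <;> rfl)
  have hwin : t ∈ winningPlays k A B := by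
    intro s hs
    have hs' : s ∈ insert t ((FP V k _).below (o.map Subtype.val)) :=
      ((isForest_FP _).step_iff.1 ht).2 ▸ hs
    rcases hs' with rfl | hs'
    · rw [hleft, hright]
      exact h
    · match o, hs' with
      | some w, hs' => exact w.2 s hs'
  exact ⟨⟨t, hwin⟩, (sub_step_iff mem_winningPlays_of_le).2 ht, rfl,
    (counit_mapMoves t).trans (congrArg Prod.fst hab),
    (counit_mapMoves t).trans (congrArg Prod.snd hab)⟩

theorem liftsSteps_left (h : PosTypeLE A B (fun _ : Fin k => none) fun _ => none) :
    LiftsSteps (winningForest k A B) (FP V k A) left := by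
  intro o t ht
  obtain ⟨b, hb⟩ := (posTypeLE h o).forth ((FP V k A).peb t) (counit t)
  obtain ⟨y, hy, hpeb, hcounit, -⟩ := exists_step hb
  exact ⟨y, hy, FP_step_ext (isForestMap_left.step hy) ht
    ((isForestMap_left.peb y).trans hpeb) hcounit⟩

theorem liftsSteps_right (h : PosTypeLE A B (fun _ : Fin k => none) fun _ => none) :
    LiftsSteps (winningForest k A B) (FP V k B) right := by
  intro o t ht
  obtain ⟨a, ha⟩ := (posTypeLE h o).back ((FP V k B).peb t) (counit t)
  obtain ⟨y, hy, hpeb, -, hcounit⟩ := exists_step ha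
  exact ⟨y, hy, FP_step_ext (isForestMap_right.step hy) ht
    ((isForestMap_right.peb y).trans hpeb) hcounit⟩

end winningForest

theorem hasSpan_iff :
    HasSpan k A B ↔
      ∀ φ : PLFml V k, φ.freeVars = ∅ → φ.Sat A (fun _ => none) → φ.Sat B (fun _ => none) := by
  refine ⟨fun h φ _ => h.sat, fun h => ?_⟩
  have hinit : PosTypeLE A B (fun _ : Fin k => none) fun _ => none := fun φ hφ =>
    h φ (Set.subset_empty_iff.1 fun i hi => hφ hi rfl)
  exact hasSpan_of_posTypeLE (winningForest.isForest k A B) winningForest.isForestMap_left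
    winningForest.isForestMap_right (winningForest.liftsSteps_left hinit)
    (winningForest.liftsSteps_right hinit) (winningForest.posTypeLE hinit)

end PositiveTypes

end PObj

theorem positive_Lk_equivalence_iff_spans_general (V : Vocab) {α β : Type} (A : Str V α)
    (B : Str V β) (k : ℕ) :
    (∀ φ : PLFml V k, φ.freeVars = ∅ →
        (φ.Sat A (fun _ => none) ↔ φ.Sat B (fun _ => none))) ↔
      ∃ Z Z' : PObj V k, PObj.IsCoalg Z ∧ PObj.IsCoalg Z' ∧
        ∃ (p : Z.carrier → (FP V k A).carrier) (q : Z.carrier → (FP V k B).carrier)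
          (p' : Z'.carrier → (FP V k B).carrier) (q' : Z'.carrier → (FP V k A).carrier),
          PObj.IsPWEmb Z (FP V k A) p ∧ PObj.IsOpen Z (FP V k A) p ∧
          BijThenOpenP V k Z (FP V k B) q ∧
          PObj.IsPWEmb Z' (FP V k B) p' ∧ PObj.IsOpen Z' (FP V k B) p' ∧
          BijThenOpenP V k Z' (FP V k A) q' := by
  constructor
  · intro h
    obtain ⟨Z, hZ, p, q, hp, hp_open, hq⟩ := PObj.hasSpan_iff.2 fun φ hφ => (h φ hφ).1
    obtain ⟨Z', hZ', p', q', hp', hp'_open, hq'⟩ := PObj.hasSpan_iff.2 fun φ hφ => (h φ hφ).2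
    exact ⟨Z, Z', hZ, hZ', p, q, p', q', hp, hp_open, hq, hp', hp'_open, hq'⟩
  · rintro ⟨Z, Z', hZ, hZ', p, q, p', q', hp, hp_open, hq, hp', hp'_open, hq'⟩ φ hφ
    exact ⟨PObj.hasSpan_iff.1 ⟨Z, hZ, p, q, hp, hp_open, hq⟩ φ hφ,
      PObj.hasSpan_iff.1 ⟨Z', hZ', p', q', hp', hp'_open, hq'⟩ φ hφ⟩

/-- `A` and `B` satisfy the same sentences of `⁺L^k` if, and only if,
there are objects `Z, Z′` of `EM(P_k^I)` and morphisms `p : Z → F_k^I(A)`,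
`q : Z → F_k^I(B)`, `p′ : Z′ → F_k^I(B)`, `q′ : Z′ → F_k^I(A)` such that `p, p′` are
open pathwise embeddings and `q, q′` are compositions of a bijection followed by an
open pathwise embedding. -/
theorem positive_Lk_equivalence_iff_spans
    (V : Vocab) [Finite V.Rel] (har : ∀ r : V.Rel, V.ar r ≠ 0)
    {α β : Type} [Nonempty α] [Nonempty β] (A : Str V α) (B : Str V β)
    (k : ℕ) (hk : 0 < k) :
    (∀ φ : PLFml V k, φ.freeVars = ∅ →
        (φ.Sat A (fun _ => none) ↔ φ.Sat B (fun _ => none))) ↔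
      ∃ Z Z' : PObj V k, PObj.IsCoalg Z ∧ PObj.IsCoalg Z' ∧
        ∃ (p : Z.carrier → (FP V k A).carrier) (q : Z.carrier → (FP V k B).carrier)
          (p' : Z'.carrier → (FP V k B).carrier) (q' : Z'.carrier → (FP V k A).carrier),
          PObj.IsPWEmb Z (FP V k A) p ∧ PObj.IsOpen Z (FP V k A) p ∧
          BijThenOpenP V k Z (FP V k B) q ∧
          PObj.IsPWEmb Z' (FP V k B) p' ∧ PObj.IsOpen Z' (FP V k B) p' ∧
          BijThenOpenP V k Z' (FP V k A) q' := by
  exact positive_Lk_equivalence_iff_spans_general V A B k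
end

section
/- For all pointed Kripke models (A,a) and (B,b) over a modal vocabulary σ and every k ∈ ℕ, there exists a positive bisimulation from F_k(A,a) to F_k(B,b) in EM(M_k) if, and only if, Duplicator has a winning strategy in the positive k-round bisimulation game from (A,a) to (B,b). -/
/-- A modal vocabulary: a type `P` of unary relation symbols (propositional variables)
and a type `R` of binary relation symbols (accessibility relations / modalities). -/
structure MVocab : Type 1 where
  P : Type
  R : Type

/-- A Kripke model over the modal vocabulary `V` with carrier `α`. -/
structure Kripke (V : MVocab) (α : Type) : Type where
  val : V.P → α → Prop
  rel : V.R → α → α → Prop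
/-- `PMWin A B n x y` : Duplicator has a winning strategy in the `n`-round positive
bisimulation game from `(A, x)` to `(B, y)`: in each round Spoiler chooses a binary
relation symbol `r` and an `r`-successor of the current element in either structure,
and Duplicator responds with an `r`-successor of the current element in the other
structure; Duplicator wins if every unary relation symbol holding at a chosen element
of `A` holds at the corresponding element of `B`. -/
def PMWin {V : MVocab} {α β : Type} (A : Kripke V α) (B : Kripke V β) :
    ℕ → α → β → Prop
  | 0, x, y => ∀ p, A.val p x → B.val p y
  | n + 1, x, y => (∀ p, A.val p x → B.val p y) ∧
      (∀ r x', A.rel r x x' → ∃ y', B.rel r y y' ∧ PMWin A B n x' y') ∧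
      (∀ r y', B.rel r y y' → ∃ x', A.rel r x x' ∧ PMWin A B n x' y')
/-- An object datum for the Eilenberg–Moore category `EM(M_k)` of the modal comonad:
a pointed Kripke model together with a (tree) order. -/
structure KObj (V : MVocab) : Type 1 where
  carrier : Type
  pt : carrier
  val : V.P → carrier → Prop
  rel : V.R → carrier → carrier → Prop
  le : carrier → carrier → Prop

namespace KObj

variable {V : MVocab}

/-- The covering relation of the order of `X`. -/
def Cover (X : KObj V) (x y : X.carrier) : Prop :=
  X.le x y ∧ x ≠ y ∧ ∀ z, X.le x z → X.le z y → z = x ∨ z = y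

/-- `X` is (the datum of) a synchronization tree of height at most `k`: the order is a
tree order of height `≤ k` rooted at the distinguished point, and `x ⋖ y` holds iff
`R(x,y)` for a unique binary relation symbol `R`. -/
def IsSyncTree (k : ℕ) (X : KObj V) : Prop :=
  (∀ x, X.le x x) ∧ (∀ x y z, X.le x y → X.le y z → X.le x z) ∧
  (∀ x y, X.le x y → X.le y x → x = y) ∧
  (∀ x, X.le X.pt x) ∧
  (∀ x : X.carrier, {y | X.le y x}.Finite ∧ {y | X.le y x}.ncard ≤ k + 1 ∧
    ∀ y z, X.le y x → X.le z x → X.le y z ∨ X.le z y) ∧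
  (∀ x y, (X.Cover x y ↔ ∃ r, X.rel r x y) ∧
    ∀ r r', X.rel r x y → X.rel r' x y → r = r')

/-- Morphisms of `EM(M_k)`: homomorphisms of pointed Kripke models. -/
def IsHom (X Y : KObj V) (f : X.carrier → Y.carrier) : Prop :=
  f X.pt = Y.pt ∧ (∀ p x, X.val p x → Y.val p (f x)) ∧
  (∀ r x y, X.rel r x y → Y.rel r (f x) (f y))

/-- Embeddings: morphisms that are injective and reflect all relations. -/
def IsEmb (X Y : KObj V) (f : X.carrier → Y.carrier) : Prop :=
  IsHom X Y f ∧ Function.Injective f ∧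
  (∀ p x, Y.val p (f x) → X.val p x) ∧
  (∀ r x y, Y.rel r (f x) (f y) → X.rel r x y)

/-- Paths: objects whose tree order is finite and linear. -/
def IsPath (X : KObj V) : Prop :=
  Finite X.carrier ∧ ∀ x y : X.carrier, X.le x y ∨ X.le y x

/-- Pathwise embeddings. -/
def IsPWEmb (k : ℕ) (X Y : KObj V) (f : X.carrier → Y.carrier) : Prop :=
  IsHom X Y f ∧ ∀ P : KObj V, IsSyncTree k P → IsPath P →
    ∀ m : P.carrier → X.carrier, IsEmb P X m → IsEmb P Y fun p => f (m p)

/-- Open morphisms: every commutative square of path embeddings over `f` admits a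
diagonal filler. -/
def IsOpen (k : ℕ) (X Y : KObj V) (f : X.carrier → Y.carrier) : Prop :=
  ∀ P Q : KObj V, IsSyncTree k P → IsPath P → IsSyncTree k Q → IsPath Q →
    ∀ (i : P.carrier → Q.carrier) (m : P.carrier → X.carrier)
      (n : Q.carrier → Y.carrier),
      IsEmb P Q i → IsEmb P X m → IsEmb Q Y n → (∀ x, n (i x) = f (m x)) →
      ∃ d : Q.carrier → X.carrier, IsHom Q X d ∧ (∀ x, d (i x) = m x) ∧ ∀ q, f (d q) = n q

end KObj

/-- Validity of a labelled path starting at `x` in the Kripke model `M`. -/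
def KValid {V : MVocab} {α : Type} (M : Kripke V α) : α → List (V.R × α) → Prop
  | _, [] => True
  | x, m :: l => M.rel m.1 x m.2 ∧ KValid M m.2 l

/-- The end point of a labelled path starting at `x`. -/
def KEnd {α ρ : Type} (x : α) (l : List (ρ × α)) : α :=
  l.foldl (fun _ m => m.2) x

/-- The `k`-unravelling `F_k(A,a)`: the synchronization tree of paths in `A` of length
at most `k` starting from `a`, with unary relations read off at the last element and a
binary relation relating a path to its one-step extensions. -/
def FM (V : MVocab) (k : ℕ) {α : Type} (A : Kripke V α) (a : α) : KObj V where
  carrier := {l : List (V.R × α) // KValid A a l ∧ l.length ≤ k}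
  pt := ⟨[], by simp [KValid]⟩
  val p s := A.val p (KEnd a s.1)
  rel r s t := ∃ x, t.1 = s.1 ++ [(r, x)]
  le s t := s.1 <+: t.1
/-- A positive bisimulation from `X` to `Y` in `EM(M_k)`: a diagram
`X ⟵p Z₁ ⟶h Z₂ ⟶q Y` in which `p` and `q` are open pathwise embeddings and `h` is a
bijective morphism. -/
def PosBisimM (V : MVocab) (k : ℕ) (X Y : KObj V) : Prop :=
  ∃ Z₁ Z₂ : KObj V, KObj.IsSyncTree k Z₁ ∧ KObj.IsSyncTree k Z₂ ∧
    ∃ (p : Z₁.carrier → X.carrier) (h : Z₁.carrier → Z₂.carrier)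
      (q : Z₂.carrier → Y.carrier),
      KObj.IsPWEmb k Z₁ X p ∧ KObj.IsOpen k Z₁ X p ∧
      KObj.IsHom Z₁ Z₂ h ∧ Function.Bijective h ∧
      KObj.IsPWEmb k Z₂ Y q ∧ KObj.IsOpen k Z₂ Y q

/-!
Between synchronization trees, the open pathwise embeddings are exactly the bounded morphisms:
homomorphisms of trees lift ancestors uniquely, so on paths only unary relations can fail to be
reflected, and openness amounts to lifting successors. Hence a positive bisimulation between trees
is the same thing as a relation between their elements that relates the roots, preserves unary
relations and has the back-and-forth property; in one direction the relation is the joint image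
of the span, in the other the span is the unravelling of the relation, with the unary relations
taken from either side. On `k`-unravellings such a relation is a winning strategy for the `k`-round
game, the number of remaining rounds being `k` minus the length of the current path.
-/

/-- Bounded morphisms (p-morphisms) of Kripke models: homomorphisms that reflect unary relations
and lift successors. -/
structure Kripke.IsBoundedMorphism {V : MVocab} {α β : Type} (A : Kripke V α) (B : Kripke V β)
    (f : α → β) : Prop where
  val_iff : ∀ p x, B.val p (f x) ↔ A.val p x
  map_rel : ∀ r x x', A.rel r x x' → B.rel r (f x) (f x')
  exists_lift : ∀ r x y, B.rel r (f x) y → ∃ x', A.rel r x x' ∧ f x' = y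

/-- A positive bisimulation relation from `(A, a)` to `(B, b)`: a relation between elements that
relates the points, has the back-and-forth property, and preserves unary relations from `A` to `B`.
It is the relational counterpart of the spans in `PosBisimM`. -/
structure Kripke.IsPosBisimRel {V : MVocab} {α β : Type} (A : Kripke V α) (a : α)
    (B : Kripke V β) (b : β) (E : α → β → Prop) : Prop where
  pt : E a b
  val : ∀ {x y}, E x y → ∀ p, A.val p x → B.val p y
  forth : ∀ {x y}, E x y → ∀ r x', A.rel r x x' → ∃ y', B.rel r y y' ∧ E x' y'
  back : ∀ {x y}, E x y → ∀ r y', B.rel r y y' → ∃ x', A.rel r x x' ∧ E x' y'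

namespace KObj

variable {V : MVocab} {k : ℕ} {X Y Z : KObj V}

/-- The Kripke model underlying an object of `EM(M_k)`, with point and order forgotten. -/
def toKripke (X : KObj V) : Kripke V X.carrier := ⟨X.val, X.rel⟩

/-! ### Synchronization trees -/

namespace IsSyncTree

variable {x y z : X.carrier} {r r' : V.R}

theorem le_refl (hX : X.IsSyncTree k) (x : X.carrier) : X.le x x := hX.1 x

theorem le_trans (hX : X.IsSyncTree k) (hxy : X.le x y) (hyz : X.le y z) : X.le x z :=
  hX.2.1 x y z hxy hyz

theorem le_antisymm (hX : X.IsSyncTree k) (hxy : X.le x y) (hyx : X.le y x) : x = y :=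
  hX.2.2.1 x y hxy hyx

theorem pt_le (hX : X.IsSyncTree k) (x : X.carrier) : X.le X.pt x := hX.2.2.2.1 x

theorem finite_setOf_le (hX : X.IsSyncTree k) (x : X.carrier) : {y | X.le y x}.Finite :=
  (hX.2.2.2.2.1 x).1

theorem ncard_setOf_le (hX : X.IsSyncTree k) (x : X.carrier) : {y | X.le y x}.ncard ≤ k + 1 :=
  (hX.2.2.2.2.1 x).2.1

theorem le_total_of_le (hX : X.IsSyncTree k) (hx : X.le x z) (hy : X.le y z) :
    X.le x y ∨ X.le y x :=
  (hX.2.2.2.2.1 z).2.2 x y hx hy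

theorem cover_iff (hX : X.IsSyncTree k) : X.Cover x y ↔ ∃ r, X.rel r x y :=
  (hX.2.2.2.2.2 x y).1

theorem cover_of_rel (hX : X.IsSyncTree k) (h : X.rel r x y) : X.Cover x y :=
  hX.cover_iff.2 ⟨r, h⟩

theorem le_of_rel (hX : X.IsSyncTree k) (h : X.rel r x y) : X.le x y :=
  (hX.cover_of_rel h).1

theorem not_le_of_rel (hX : X.IsSyncTree k) (h : X.rel r x y) : ¬ X.le y x :=
  fun hyx => (hX.cover_of_rel h).2.1 (hX.le_antisymm (hX.le_of_rel h) hyx)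

theorem le_iff_of_rel (hX : X.IsSyncTree k) (h : X.rel r x y) :
    X.le z y ↔ X.le z x ∨ z = y := by
  constructor
  · intro hzy
    rcases hX.le_total_of_le hzy (hX.le_of_rel h) with hzx | hxz
    · exact Or.inl hzx
    · exact ((hX.cover_of_rel h).2.2 z hxz hzy).imp_left
        fun (e : z = x) => e ▸ hX.le_refl z
  · rintro (hzx | rfl)
    · exact hX.le_trans hzx (hX.le_of_rel h)
    · exact hX.le_refl z

theorem eq_and_eq_of_rel_of_rel (hX : X.IsSyncTree k) (h : X.rel r x z) (h' : X.rel r' y z) :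
    x = y ∧ r = r' := by
  have hxy : X.le x y := ((hX.le_iff_of_rel h').1 (hX.le_of_rel h)).resolve_right
    (hX.cover_of_rel h).2.1
  have hyx : X.le y x := ((hX.le_iff_of_rel h).1 (hX.le_of_rel h')).resolve_right
    (hX.cover_of_rel h').2.1
  obtain rfl := hX.le_antisymm hxy hyx
  exact ⟨rfl, (hX.2.2.2.2.2 x z).2 r r' h h'⟩

/-- The tree order of a synchronization tree, bundled so that the order library applies to it. -/
abbrev partialOrder (hX : X.IsSyncTree k) : PartialOrder X.carrier where
  le := X.le
  le_refl := hX.le_refl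
  le_trans _ _ _ := hX.le_trans
  le_antisymm _ _ := hX.le_antisymm

theorem le_iff_reflTransGen (hX : X.IsSyncTree k) :
    X.le x y ↔ Relation.ReflTransGen (fun u v => ∃ r, X.rel r u v) x y := by
  constructor
  · intro hxy
    let _ := hX.partialOrder
    let _ : LocallyFiniteOrder X.carrier := LocallyFiniteOrder.ofFiniteIcc fun _ v =>
      (hX.finite_setOf_le v).subset fun _ hw => hw.2
    have hle : x ≤ y := hxy
    exact Relation.ReflTransGen.mono
      (fun _ _ huv => hX.cover_iff.1 ⟨huv.le, huv.ne, fun _ => huv.eq_or_eq⟩) _ _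
      (le_iff_reflTransGen_covBy.1 hle)
  · intro hxy
    induction hxy with
    | refl => exact hX.le_refl x
    | tail _ huv ih => exact hX.le_trans ih (hX.le_of_rel huv.choose_spec)

theorem eq_or_exists_rel_of_le (hX : X.IsSyncTree k) (h : X.le x y) :
    x = y ∨ ∃ z r, X.le x z ∧ X.rel r z y := by
  rcases (hX.le_iff_reflTransGen.1 h).cases_tail with rfl | ⟨z, hxz, r, hr⟩
  · exact Or.inl rfl
  · exact Or.inr ⟨z, r, hX.le_iff_reflTransGen.2 hxz, hr⟩

theorem ncard_lt_ncard_of_rel (hX : X.IsSyncTree k) (h : X.rel r x y) :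
    {w | X.le w x}.ncard < {w | X.le w y}.ncard :=
  Set.ncard_lt_ncard
    ⟨fun _ hw => hX.le_trans hw (hX.le_of_rel h),
      fun hsub => hX.not_le_of_rel h (hsub (hX.le_refl y))⟩
    (hX.finite_setOf_le y)

end IsSyncTree

theorem IsPath.exists_top (hP : X.IsPath) (hX : X.IsSyncTree k) : ∃ t, ∀ x, X.le x t := by
  let _ := hX.partialOrder
  have := hP.1
  have : Nonempty X.carrier := ⟨X.pt⟩
  have : IsDirectedOrder X.carrier :=
    ⟨fun x y => (hP.2 x y).elim (fun h => ⟨y, h, hX.le_refl y⟩) fun h => ⟨x, hX.le_refl x, h⟩⟩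
  exact Finite.exists_le (id : X.carrier → X.carrier)

/-! ### Homomorphisms of synchronization trees -/

namespace IsHom

variable {f : X.carrier → Y.carrier} {g : Y.carrier → Z.carrier}

theorem map_pt (hf : IsHom X Y f) : f X.pt = Y.pt := hf.1

theorem map_val (hf : IsHom X Y f) {p : V.P} {x : X.carrier} (h : X.val p x) : Y.val p (f x) :=
  hf.2.1 p x h

theorem map_rel (hf : IsHom X Y f) {r : V.R} {x x' : X.carrier} (h : X.rel r x x') :
    Y.rel r (f x) (f x') :=
  hf.2.2 r x x' h

theorem comp (hg : IsHom Y Z g) (hf : IsHom X Y f) : IsHom X Z (g ∘ f) :=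
  ⟨(congrArg g hf.map_pt).trans hg.map_pt, fun _ _ h => hg.map_val (hf.map_val h),
    fun _ _ _ h => hg.map_rel (hf.map_rel h)⟩

theorem map_le (hf : IsHom X Y f) (hX : X.IsSyncTree k) (hY : Y.IsSyncTree k)
    {x x' : X.carrier} (h : X.le x x') : Y.le (f x) (f x') :=
  hY.le_iff_reflTransGen.2 <|
    (hX.le_iff_reflTransGen.1 h).lift f fun _ _ ⟨r, hr⟩ => ⟨r, hf.map_rel hr⟩

theorem eq_of_le_of_map_eq (hf : IsHom X Y f) (hX : X.IsSyncTree k) (hY : Y.IsSyncTree k)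
    {x x' : X.carrier} (hle : X.le x x') (heq : f x = f x') : x = x' := by
  rcases hX.eq_or_exists_rel_of_le hle with rfl | ⟨z, r, hxz, hr⟩
  · rfl
  · exact absurd (heq ▸ hf.map_le hX hY hxz) (hY.not_le_of_rel (hf.map_rel hr))

theorem injOn_setOf_le (hf : IsHom X Y f) (hX : X.IsSyncTree k) (hY : Y.IsSyncTree k)
    (x : X.carrier) : Set.InjOn f {w | X.le w x} := by
  intro u hu v hv heq
  rcases hX.le_total_of_le hu hv with huv | hvu
  · exact hf.eq_of_le_of_map_eq hX hY huv heq
  · exact (hf.eq_of_le_of_map_eq hX hY hvu heq.symm).symm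

theorem exists_rel_of_rel_map (hf : IsHom X Y f) (hX : X.IsSyncTree k) (hY : Y.IsSyncTree k)
    {r : V.R} {y : Y.carrier} {x : X.carrier} (h : Y.rel r y (f x)) :
    ∃ w, X.rel r w x ∧ f w = y := by
  rcases hX.eq_or_exists_rel_of_le (hX.pt_le x) with rfl | ⟨w, r', -, hw⟩
  · exact absurd (hf.map_pt ▸ hY.pt_le y) (hY.not_le_of_rel h)
  · obtain ⟨rfl, rfl⟩ := hY.eq_and_eq_of_rel_of_rel (hf.map_rel hw) h
    exact ⟨w, hw, rfl⟩

theorem rel_of_rel_map (hf : IsHom X Y f) (hX : X.IsSyncTree k) (hY : Y.IsSyncTree k)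
    (hinj : Function.Injective f) {r : V.R} {x x' : X.carrier} (h : Y.rel r (f x) (f x')) :
    X.rel r x x' := by
  obtain ⟨w, hw, heq⟩ := hf.exists_rel_of_rel_map hX hY h
  exact hinj heq ▸ hw

theorem exists_le_of_le_map (hf : IsHom X Y f) (hX : X.IsSyncTree k) (hY : Y.IsSyncTree k)
    {y : Y.carrier} {x : X.carrier} (h : Y.le y (f x)) : ∃ w, X.le w x ∧ f w = y := by
  induction hY.le_iff_reflTransGen.1 h using Relation.ReflTransGen.head_induction_on with
  | refl => exact ⟨x, hX.le_refl x, rfl⟩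
  | head huv hv ih =>
    obtain ⟨r, hr⟩ := huv
    obtain ⟨v, hvx, rfl⟩ := ih (hY.le_iff_reflTransGen.2 hv)
    obtain ⟨u, hu, rfl⟩ := hf.exists_rel_of_rel_map hX hY hr
    exact ⟨u, hX.le_trans (hX.le_of_rel hu) hvx, rfl⟩

theorem injective_of_isPath (hf : IsHom X Y f) (hX : X.IsSyncTree k) (hY : Y.IsSyncTree k)
    (hP : X.IsPath) : Function.Injective f := by
  obtain ⟨t, ht⟩ := hP.exists_top hX
  exact fun u v => hf.injOn_setOf_le hX hY t (ht u) (ht v)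

end IsHom

/-! ### Principal down-sets -/

/-- The path `{y | y ≤ x}` below an element `x` of a synchronization tree. -/
def below (hX : X.IsSyncTree k) (x : X.carrier) : KObj V where
  carrier := {y // X.le y x}
  pt := ⟨X.pt, hX.pt_le x⟩
  val p y := X.val p y.1
  rel r y z := X.rel r y.1 z.1
  le y z := X.le y.1 z.1

theorem cover_below_iff (hX : X.IsSyncTree k) {x : X.carrier} {y z : (below hX x).carrier} :
    (below hX x).Cover y z ↔ X.Cover y.1 z.1 := by
  constructor
  · rintro ⟨hyz, hne, hbetween⟩
    refine ⟨hyz, fun h => hne (Subtype.ext h), fun w hyw hwz => ?_⟩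
    exact (hbetween ⟨w, hX.le_trans hwz z.2⟩ hyw hwz).imp
      (congrArg Subtype.val) (congrArg Subtype.val)
  · rintro ⟨hyz, hne, hbetween⟩
    exact ⟨hyz, fun h => hne (congrArg Subtype.val h),
      fun w hyw hwz => (hbetween w.1 hyw hwz).imp Subtype.ext Subtype.ext⟩

theorem isSyncTree_below (hX : X.IsSyncTree k) (x : X.carrier) :
    (below hX x).IsSyncTree k := by
  refine ⟨fun y => hX.le_refl y.1, fun _ _ _ => hX.le_trans,
    fun _ _ hyz hzy => Subtype.ext (hX.le_antisymm hyz hzy), fun y => hX.pt_le y.1,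
    fun y => ?_, fun y z => ⟨(cover_below_iff hX).trans hX.cover_iff, fun _ _ h h' =>
      (hX.eq_and_eq_of_rel_of_rel h h').2⟩⟩
  have hmaps : Set.MapsTo Subtype.val {z : (below hX x).carrier | (below hX x).le z y}
      {z | X.le z y.1} := fun _ hz => hz
  have hinj : Set.InjOn Subtype.val {z : (below hX x).carrier | (below hX x).le z y} :=
    Subtype.val_injective.injOn
  exact ⟨.of_injOn hmaps hinj (hX.finite_setOf_le y.1),
    (Set.ncard_le_ncard_of_injOn _ hmaps hinj (hX.finite_setOf_le y.1)).trans
      (hX.ncard_setOf_le y.1),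
    fun _ _ => hX.le_total_of_le⟩

theorem isPath_below (hX : X.IsSyncTree k) (x : X.carrier) : (below hX x).IsPath :=
  ⟨(hX.finite_setOf_le x).to_subtype, fun y z => hX.le_total_of_le y.2 z.2⟩

theorem isEmb_val_below (hX : X.IsSyncTree k) (x : X.carrier) :
    IsEmb (below hX x) X Subtype.val :=
  ⟨⟨rfl, fun _ _ => id, fun _ _ _ => id⟩, Subtype.val_injective, fun _ _ => id, fun _ _ _ => id⟩

/-! ### Open pathwise embeddings are bounded morphisms -/

section OpenPathwiseEmbedding

variable {f : X.carrier → Y.carrier}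

theorem IsHom.isPWEmb (hf : IsHom X Y f) (hY : Y.IsSyncTree k)
    (hval : ∀ p x, Y.val p (f x) → X.val p x) : IsPWEmb k X Y f := by
  refine ⟨hf, fun P hP hPath m hm => ?_⟩
  have hfm : IsHom P Y (f ∘ m) := hf.comp hm.1
  have hinj : Function.Injective (f ∘ m) := hfm.injective_of_isPath hP hY hPath
  exact ⟨hfm, hinj, fun p x h => hm.2.2.1 p x (hval p (m x) h),
    fun _ _ _ => hfm.rel_of_rel_map hP hY hinj⟩

theorem IsPWEmb.val_of_val_map (hf : IsPWEmb k X Y f) (hX : X.IsSyncTree k) {p : V.P}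
    {x : X.carrier} (h : Y.val p (f x)) : X.val p x :=
  (hf.2 _ (isSyncTree_below hX x) (isPath_below hX x) _ (isEmb_val_below hX x)).2.2.1 p
    ⟨x, hX.le_refl x⟩ h

theorem IsPWEmb.isEmb_below (hf : IsPWEmb k X Y f) (hX : X.IsSyncTree k) (hY : Y.IsSyncTree k)
    {x : X.carrier} {y : Y.carrier} (h : Y.le (f x) y) :
    IsEmb (below hX x) (below hY y)
      fun w => ⟨f w.1, hY.le_trans (hf.1.map_le hX hY w.2) h⟩ := by
  obtain ⟨hhom, hinj, hval, hrel⟩ :=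
    hf.2 _ (isSyncTree_below hX x) (isPath_below hX x) _ (isEmb_val_below hX x)
  exact ⟨⟨Subtype.ext hhom.map_pt, hhom.2.1, hhom.2.2⟩,
    fun _ _ e => hinj (congrArg Subtype.val e), hval, hrel⟩

theorem IsOpen.exists_rel_of_rel_map (ho : IsOpen k X Y f) (hf : IsPWEmb k X Y f)
    (hX : X.IsSyncTree k) (hY : Y.IsSyncTree k) {r : V.R} {x : X.carrier} {y : Y.carrier}
    (h : Y.rel r (f x) y) : ∃ x', X.rel r x x' ∧ f x' = y := by
  obtain ⟨d, hd, hdi, hfd⟩ := ho _ _ (isSyncTree_below hX x) (isPath_below hX x)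
    (isSyncTree_below hY y) (isPath_below hY y) _ Subtype.val Subtype.val
    (hf.isEmb_below hX hY (hY.le_of_rel h)) (isEmb_val_below hX x) (isEmb_val_below hY y)
    fun _ => rfl
  let top : (below hY y).carrier := ⟨y, hY.le_refl y⟩
  refine ⟨d top, ?_, hfd top⟩
  have hrel : X.rel r (d ⟨f x, hY.le_of_rel h⟩) (d top) := hd.map_rel h
  rwa [hdi ⟨x, hX.le_refl x⟩] at hrel

theorem exists_le_of_map_le (hX : X.IsSyncTree k) (hY : Y.IsSyncTree k)
    (hlift : ∀ r x y, Y.rel r (f x) y → ∃ x', X.rel r x x' ∧ f x' = y)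
    {x : X.carrier} {y : Y.carrier} (h : Y.le (f x) y) : ∃ x', X.le x x' ∧ f x' = y := by
  induction hY.le_iff_reflTransGen.1 h with
  | refl => exact ⟨x, hX.le_refl x, rfl⟩
  | tail hu huv ih =>
    obtain ⟨r, hr⟩ := huv
    obtain ⟨u, hxu, rfl⟩ := ih (hY.le_iff_reflTransGen.2 hu)
    obtain ⟨v, huv, rfl⟩ := hlift r u _ hr
    exact ⟨v, hX.le_trans hxu (hX.le_of_rel huv), rfl⟩

theorem IsHom.of_comp_of_le (hf : IsHom X Y f) (hX : X.IsSyncTree k) (hY : Y.IsSyncTree k)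
    (hval : ∀ p x, Y.val p (f x) → X.val p x) {d : Z.carrier → X.carrier}
    (hfd : IsHom Z Y (f ∘ d)) {x : X.carrier} (hd : ∀ z, X.le (d z) x) : IsHom Z X d := by
  have hinj := hf.injOn_setOf_le hX hY x
  refine ⟨?_, fun p z h => hval p (d z) (hfd.map_val h), fun r z z' h => ?_⟩
  · exact hinj (hd Z.pt) (hX.pt_le x) (hfd.map_pt.trans hf.map_pt.symm)
  · obtain ⟨w, hw, heq⟩ := hf.exists_rel_of_rel_map hX hY (hfd.map_rel h)
    exact hinj (hX.le_trans (hX.le_of_rel hw) (hd z')) (hd z) heq ▸ hw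

theorem IsHom.isOpen (hf : IsHom X Y f) (hX : X.IsSyncTree k) (hY : Y.IsSyncTree k)
    (hval : ∀ p x, Y.val p (f x) → X.val p x)
    (hlift : ∀ r x y, Y.rel r (f x) y → ∃ x', X.rel r x x' ∧ f x' = y) :
    IsOpen k X Y f := by
  intro P Q hP hPPath hQ hQPath i m n _ hm hn hcomm
  obtain ⟨t, ht⟩ := hPPath.exists_top hP
  obtain ⟨u, hu⟩ := hQPath.exists_top hQ
  have hle : Y.le (f (m t)) (n u) := hcomm t ▸ hn.1.map_le hQ hY (hu (i t))
  obtain ⟨x, hmx, hfx⟩ := exists_le_of_map_le hX hY hlift hle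
  have hlow : ∀ q, ∃ w, X.le w x ∧ f w = n q := fun q =>
    hf.exists_le_of_le_map hX hY (hfx ▸ hn.1.map_le hQ hY (hu q))
  choose d hdx hfd using hlow
  refine ⟨d, hf.of_comp_of_le hX hY hval ((funext hfd : f ∘ d = n) ▸ hn.1) hdx, fun v => ?_, hfd⟩
  have hmv : X.le (m v) x := hX.le_trans (hm.1.map_le hP hX (ht v)) hmx
  exact hf.injOn_setOf_le hX hY x (hdx (i v)) hmv ((hfd (i v)).trans (hcomm v))

theorem isPWEmb_and_isOpen_iff (hX : X.IsSyncTree k) (hY : Y.IsSyncTree k) :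
    IsPWEmb k X Y f ∧ IsOpen k X Y f ↔
      f X.pt = Y.pt ∧ X.toKripke.IsBoundedMorphism Y.toKripke f := by
  constructor
  · rintro ⟨hf, ho⟩
    exact ⟨hf.1.map_pt, fun _ _ => ⟨hf.val_of_val_map hX, hf.1.map_val⟩,
      fun _ _ _ => hf.1.map_rel, fun _ _ _ => ho.exists_rel_of_rel_map hf hX hY⟩
  · rintro ⟨hpt, hb⟩
    have hf : IsHom X Y f := ⟨hpt, fun p x => (hb.val_iff p x).2, hb.map_rel⟩
    have hval : ∀ p x, Y.val p (f x) → X.val p x := fun p x => (hb.val_iff p x).1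
    exact ⟨hf.isPWEmb hY hval, hf.isOpen hX hY hval hb.exists_lift⟩

end OpenPathwiseEmbedding

end KObj

/-! ### Unravellings -/

section Unravelling

variable {V : MVocab} {k : ℕ} {α γ : Type} {A : Kripke V α} {a : α}

theorem KEnd_append_singleton {ρ : Type} (a : α) (l : List (ρ × α)) (m : ρ × α) :
    KEnd a (l ++ [m]) = m.2 := by
  simp [KEnd]

theorem KValid_append {l l' : List (V.R × α)} :
    KValid A a (l ++ l') ↔ KValid A a l ∧ KValid A (KEnd a l) l' := by
  induction l generalizing a with
  | nil => simp [KValid, KEnd]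
  | cons m l ih => simp [KValid, KEnd, ih, and_assoc]

theorem KValid.of_prefix {l l' : List (V.R × α)} (h : KValid A a l') (hl : l <+: l') :
    KValid A a l := by
  obtain ⟨m, rfl⟩ := hl
  exact (KValid_append.1 h).1

theorem KValid_congr {A' : Kripke V α} (h : A.rel = A'.rel) {l : List (V.R × α)} :
    KValid A a l ↔ KValid A' a l := by
  induction l generalizing a with
  | nil => exact Iff.rfl
  | cons m l ih => exact and_congr (by rw [h]) ih

namespace FM

variable {r : V.R} {s t : (FM V k A a).carrier}

theorem rel_KEnd_of_rel (h : (FM V k A a).rel r s t) :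
    A.rel r (KEnd a s.1) (KEnd a t.1) := by
  obtain ⟨x, hx⟩ := h
  have hvalid := t.2.1
  rw [hx, KValid_append] at hvalid
  rw [hx, KEnd_append_singleton]
  exact hvalid.2.1

theorem length_of_rel (h : (FM V k A a).rel r s t) : t.1.length = s.1.length + 1 := by
  obtain ⟨x, hx⟩ := h
  simp [hx]

theorem exists_rel_of_rel_KEnd (hs : s.1.length < k) {x : α} (h : A.rel r (KEnd a s.1) x) :
    ∃ t, (FM V k A a).rel r s t ∧ KEnd a t.1 = x :=
  ⟨⟨s.1 ++ [(r, x)], KValid_append.2 ⟨s.2.1, h, trivial⟩, by simpa using hs⟩, ⟨x, rfl⟩,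
    KEnd_append_singleton _ _ _⟩

theorem exists_rel_iff :
    (∃ r, (FM V k A a).rel r s t) ↔ s.1 <+: t.1 ∧ t.1.length = s.1.length + 1 := by
  constructor
  · rintro ⟨r, h⟩
    exact ⟨⟨_, h.choose_spec.symm⟩, length_of_rel h⟩
  · rintro ⟨⟨l, hl⟩, hlen⟩
    have hl1 : l.length = 1 := by rw [← hl, List.length_append] at hlen; omega
    obtain ⟨m, rfl⟩ := List.length_eq_one_iff.1 hl1
    exact ⟨m.1, m.2, hl.symm⟩

theorem cover_iff :
    (FM V k A a).Cover s t ↔ s.1 <+: t.1 ∧ t.1.length = s.1.length + 1 := by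
  constructor
  · rintro ⟨hst, hne, hbetween⟩
    refine ⟨hst, ?_⟩
    have hlt : s.1.length < t.1.length := lt_of_le_of_ne hst.length_le fun h =>
      hne (Subtype.ext (hst.eq_of_length h))
    let u : (FM V k A a).carrier := ⟨t.1.take (s.1.length + 1),
      t.2.1.of_prefix (List.take_prefix _ _), (List.length_take_le' _ _).trans t.2.2⟩
    have hu : u.1.length = s.1.length + 1 := List.length_take_of_le hlt
    have hsu : s.1 <+: u.1 := List.prefix_take_iff.2 ⟨hst, Nat.le_succ _⟩
    rcases hbetween u hsu (List.take_prefix _ _) with h | h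
    · rw [h] at hu; omega
    · rwa [h] at hu
  · rintro ⟨hst, hlen⟩
    refine ⟨hst, fun h => by rw [h] at hlen; omega, fun u hsu hut => ?_⟩
    have hsu_len := List.IsPrefix.length_le hsu
    by_cases hu : u.1.length = s.1.length
    · exact Or.inl (Subtype.ext (List.IsPrefix.eq_of_length hsu hu.symm).symm)
    · exact Or.inr (Subtype.ext (List.IsPrefix.eq_of_length_le hut (by omega)))

theorem injOn_length (s : (FM V k A a).carrier) :
    Set.InjOn (fun t : (FM V k A a).carrier => t.1.length) {t | (FM V k A a).le t s} :=
  fun _ ht _ hu h =>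
    Subtype.ext ((List.prefix_of_prefix_length_le ht hu h.le).eq_of_length h)

theorem isSyncTree (V : MVocab) (k : ℕ) {α : Type} (A : Kripke V α) (a : α) :
    (FM V k A a).IsSyncTree k := by
  refine ⟨fun _ => List.prefix_rfl, fun _ _ _ => List.IsPrefix.trans,
    fun _ _ h h' => Subtype.ext (h.eq_of_length_le h'.length_le), fun _ => List.nil_prefix,
    fun s => ?_, fun s t => ⟨cover_iff.trans exists_rel_iff.symm, ?_⟩⟩
  · have hmaps : Set.MapsTo (fun t : (FM V k A a).carrier => t.1.length)
        {t | (FM V k A a).le t s} (Finset.range (k + 1) : Set ℕ) := fun t _ => by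
      simpa using Nat.lt_succ_of_le t.2.2
    refine ⟨.of_injOn hmaps (injOn_length s) (Finset.finite_toSet _), ?_,
      fun _ _ => List.prefix_or_prefix_of_prefix⟩
    simpa only [Set.ncard_coe_finset, Finset.card_range] using
      Set.ncard_le_ncard_of_injOn _ hmaps (injOn_length s) (Finset.finite_toSet _)
  · rintro r r' ⟨x, hx⟩ ⟨x', hx'⟩
    have heq : [(r, x)] = [(r', x')] := List.append_cancel_left (hx.symm.trans hx')
    exact congrArg Prod.fst (List.singleton_inj.1 heq)

theorem exists_isHom_bijective {A' : Kripke V α} (hrel : A.rel = A'.rel)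
    (hval : ∀ p x, A.val p x → A'.val p x) (k : ℕ) (a : α) :
    ∃ h, KObj.IsHom (FM V k A a) (FM V k A' a) h ∧ Function.Bijective h := by
  refine ⟨fun s => ⟨s.1, (KValid_congr hrel).1 s.2.1, s.2.2⟩,
    ⟨rfl, fun p s => hval p _, fun _ _ _ => id⟩, fun s t h => ?_,
    fun s => ⟨⟨s.1, (KValid_congr hrel).2 s.2.1, s.2.2⟩, rfl⟩⟩
  exact Subtype.ext (Subtype.mk.inj h)

end FM

theorem KValid.ncard_add_length_le {X : KObj V} (hX : X.IsSyncTree k) {C : Kripke V γ}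
    {f : γ → X.carrier} (hf : ∀ r c c', C.rel r c c' → X.rel r (f c) (f c')) {c : γ}
    {l : List (V.R × γ)} (h : KValid C c l) :
    {x | X.le x (f c)}.ncard + l.length ≤ {x | X.le x (f (KEnd c l))}.ncard := by
  induction l generalizing c with
  | nil => exact le_rfl
  | cons m l ih =>
    calc {x | X.le x (f c)}.ncard + (m :: l).length
        = ({x | X.le x (f c)}.ncard + 1) + l.length := by rw [List.length_cons]; omega
      _ ≤ {x | X.le x (f m.2)}.ncard + l.length :=
          Nat.add_le_add_right (hX.ncard_lt_ncard_of_rel (hf _ _ _ h.1)) _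
      _ ≤ _ := ih h.2

-- A path that has reached length `k` ends, in a tree of height `k`, at an element without
-- successors; so the truncation of the unravelling loses nothing.
theorem Kripke.IsBoundedMorphism.comp_KEnd {X : KObj V} (hX : X.IsSyncTree k) {C : Kripke V γ}
    {f : γ → X.carrier} (hf : C.IsBoundedMorphism X.toKripke f) (c : γ) :
    (FM V k C c).toKripke.IsBoundedMorphism X.toKripke fun s => f (KEnd c s.1) where
  val_iff p s := hf.val_iff p (KEnd c s.1)
  map_rel r _ _ h := hf.map_rel r _ _ (FM.rel_KEnd_of_rel h)
  exists_lift r s x h := by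
    have hlt : s.1.length < k := by
      have hroot : 0 < {y | X.le y (f c)}.ncard :=
        (Set.ncard_pos (hX.finite_setOf_le _)).2 ⟨f c, hX.le_refl _⟩
      have hwalk := s.2.1.ncard_add_length_le hX hf.map_rel
      have hstep := hX.ncard_lt_ncard_of_rel h
      have hheight := hX.ncard_setOf_le x
      omega
    obtain ⟨c', hc', rfl⟩ := hf.exists_lift r _ x h
    obtain ⟨t, hst, rfl⟩ := FM.exists_rel_of_rel_KEnd hlt hc'
    exact ⟨t, hst, rfl⟩

end Unravelling

/-! ### Positive bisimulations as relations -/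

section Relation

variable {V : MVocab} {k : ℕ} {X Y : KObj V}

theorem PosBisimM.exists_isPosBisimRel (hX : X.IsSyncTree k) (hY : Y.IsSyncTree k)
    (h : PosBisimM V k X Y) : ∃ E, X.toKripke.IsPosBisimRel X.pt Y.toKripke Y.pt E := by
  obtain ⟨Z₁, Z₂, hZ₁, hZ₂, p, h, q, hp, hpo, hh, hbij, hq, hqo⟩ := h
  obtain ⟨hppt, hpb⟩ := (KObj.isPWEmb_and_isOpen_iff hZ₁ hX).1 ⟨hp, hpo⟩
  obtain ⟨hqpt, hqb⟩ := (KObj.isPWEmb_and_isOpen_iff hZ₂ hY).1 ⟨hq, hqo⟩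
  refine ⟨fun x y => ∃ z, p z = x ∧ q (h z) = y,
    ⟨Z₁.pt, hppt, (congrArg q hh.map_pt).trans hqpt⟩, ?_, ?_, ?_⟩
  · rintro _ _ ⟨z, rfl, rfl⟩ u hu
    exact (hqb.val_iff u _).2 (hh.map_val ((hpb.val_iff u z).1 hu))
  · rintro _ _ ⟨z, rfl, rfl⟩ r x' hx'
    obtain ⟨z', hz', rfl⟩ := hpb.exists_lift r z x' hx'
    exact ⟨_, hqb.map_rel r _ _ (hh.map_rel hz'), z', rfl, rfl⟩
  · rintro _ _ ⟨z, rfl, rfl⟩ r y' hy'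
    obtain ⟨w, hw, rfl⟩ := hqb.exists_lift r (h z) y' hy'
    obtain ⟨z', rfl⟩ := hbij.2 w
    have hrel : Z₁.rel r z z' := hh.rel_of_rel_map hZ₁ hZ₂ hbij.1 hw
    exact ⟨p z', hpb.map_rel r z z' hrel, z', rfl, rfl⟩

/-- The graph of a relation `E` between `A` and `B`, with synchronous transitions and a given
valuation; the apexes of the span realising `E` are its unravellings for the valuations of `A`
and of `B`. -/
def Kripke.graph {α β : Type} (A : Kripke V α) (B : Kripke V β) (E : α → β → Prop)
    (val : V.P → {c : α × β // E c.1 c.2} → Prop) : Kripke V {c : α × β // E c.1 c.2} where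
  val := val
  rel r c c' := A.rel r c.1.1 c'.1.1 ∧ B.rel r c.1.2 c'.1.2

namespace Kripke.IsPosBisimRel

variable {α β : Type} {A : Kripke V α} {a : α} {B : Kripke V β} {b : β} {E : α → β → Prop}

theorem isBoundedMorphism_fst (hE : A.IsPosBisimRel a B b E) :
    (A.graph B E fun p c => A.val p c.1.1).IsBoundedMorphism A fun c => c.1.1 where
  val_iff _ _ := Iff.rfl
  map_rel _ _ _ h := h.1
  exists_lift r c x' hx' := by
    obtain ⟨y', hy', hxy'⟩ := hE.forth c.2 r x' hx'
    exact ⟨⟨(x', y'), hxy'⟩, ⟨hx', hy'⟩, rfl⟩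

theorem isBoundedMorphism_snd (hE : A.IsPosBisimRel a B b E) :
    (A.graph B E fun p c => B.val p c.1.2).IsBoundedMorphism B fun c => c.1.2 where
  val_iff _ _ := Iff.rfl
  map_rel _ _ _ h := h.2
  exists_lift r c y' hy' := by
    obtain ⟨x', hx', hxy'⟩ := hE.back c.2 r y' hy'
    exact ⟨⟨(x', y'), hxy'⟩, ⟨hx', hy'⟩, rfl⟩

theorem posBisimM {E : X.carrier → Y.carrier → Prop}
    (hE : X.toKripke.IsPosBisimRel X.pt Y.toKripke Y.pt E) (hX : X.IsSyncTree k)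
    (hY : Y.IsSyncTree k) : PosBisimM V k X Y := by
  let root : {c : X.carrier × Y.carrier // E c.1 c.2} := ⟨(X.pt, Y.pt), hE.pt⟩
  have hZ₁ := FM.isSyncTree V k (X.toKripke.graph Y.toKripke E fun p c => X.val p c.1.1) root
  have hZ₂ := FM.isSyncTree V k (X.toKripke.graph Y.toKripke E fun p c => Y.val p c.1.2) root
  obtain ⟨hp, hpo⟩ := (KObj.isPWEmb_and_isOpen_iff hZ₁ hX).2
    ⟨rfl, hE.isBoundedMorphism_fst.comp_KEnd hX root⟩
  obtain ⟨hq, hqo⟩ := (KObj.isPWEmb_and_isOpen_iff hZ₂ hY).2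
    ⟨rfl, hE.isBoundedMorphism_snd.comp_KEnd hY root⟩
  obtain ⟨h, hh, hbij⟩ := FM.exists_isHom_bijective
    (A := X.toKripke.graph Y.toKripke E fun p c => X.val p c.1.1)
    (A' := X.toKripke.graph Y.toKripke E fun p c => Y.val p c.1.2)
    rfl (fun p c => hE.val c.2 p) k root
  exact ⟨_, _, hZ₁, hZ₂, _, h, _, hp, hpo, hh, hbij, hq, hqo⟩

end Kripke.IsPosBisimRel

theorem posBisimM_iff_exists_isPosBisimRel (hX : X.IsSyncTree k) (hY : Y.IsSyncTree k) :
    PosBisimM V k X Y ↔ ∃ E, X.toKripke.IsPosBisimRel X.pt Y.toKripke Y.pt E :=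
  ⟨PosBisimM.exists_isPosBisimRel hX hY, fun ⟨_, hE⟩ => hE.posBisimM hX hY⟩

end Relation

/-! ### The game on unravellings -/

section Game

variable {V : MVocab} {α β : Type} {A : Kripke V α} {a : α} {B : Kripke V β} {b : β} {k : ℕ}

theorem PMWin.val {n : ℕ} {x : α} {y : β} (h : PMWin A B n x y) :
    ∀ p, A.val p x → B.val p y := by
  cases n with
  | zero => exact h
  | succ n => exact h.1

theorem Kripke.IsPosBisimRel.pmWin
    {E : (FM V k A a).carrier → (FM V k B b).carrier → Prop}
    (hE : (FM V k A a).toKripke.IsPosBisimRel (FM V k A a).pt (FM V k B b).toKripke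
      (FM V k B b).pt E) {n : ℕ} {s : (FM V k A a).carrier} {t : (FM V k B b).carrier}
    (hst : E s t) (hs : s.1.length + n ≤ k) (ht : t.1.length + n ≤ k) :
    PMWin A B n (KEnd a s.1) (KEnd b t.1) := by
  induction n generalizing s t with
  | zero => exact hE.val hst
  | succ n ih =>
    have ih' : ∀ {r s' t'}, E s' t' → (FM V k A a).rel r s s' → (FM V k B b).rel r t t' →
        PMWin A B n (KEnd a s'.1) (KEnd b t'.1) := fun hst' hs' ht' =>
      ih hst' (by rw [FM.length_of_rel hs']; omega) (by rw [FM.length_of_rel ht']; omega)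
    refine ⟨hE.val hst, fun r x' hx' => ?_, fun r y' hy' => ?_⟩
    · obtain ⟨s', hs', rfl⟩ := FM.exists_rel_of_rel_KEnd (by omega) hx'
      obtain ⟨t', ht', hst'⟩ := hE.forth hst r s' hs'
      exact ⟨_, FM.rel_KEnd_of_rel ht', ih' hst' hs' ht'⟩
    · obtain ⟨t', ht', rfl⟩ := FM.exists_rel_of_rel_KEnd (by omega) hy'
      obtain ⟨s', hs', hst'⟩ := hE.back hst r t' ht'
      exact ⟨_, FM.rel_KEnd_of_rel hs', ih' hst' hs' ht'⟩

theorem PMWin.isPosBisimRel (h : PMWin A B k a b) :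
    (FM V k A a).toKripke.IsPosBisimRel (FM V k A a).pt (FM V k B b).toKripke (FM V k B b).pt
      fun s t => ∃ n, s.1.length + n = k ∧ t.1.length + n = k ∧
        PMWin A B n (KEnd a s.1) (KEnd b t.1) where
  pt := ⟨k, Nat.zero_add k, Nat.zero_add k, h⟩
  val := fun ⟨_, _, _, hw⟩ => hw.val
  forth := by
    rintro s t ⟨n, hs, ht, hw⟩ r s' hs'
    have hlen := FM.length_of_rel hs'
    have hbound := s'.2.2
    obtain ⟨n, rfl⟩ : ∃ m, n = m + 1 := Nat.exists_eq_succ_of_ne_zero (by omega)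
    obtain ⟨y', hy', hw'⟩ := hw.2.1 r _ (FM.rel_KEnd_of_rel hs')
    obtain ⟨t', ht', rfl⟩ := FM.exists_rel_of_rel_KEnd (by omega) hy'
    exact ⟨t', ht', n, by omega, by rw [FM.length_of_rel ht']; omega, hw'⟩
  back := by
    rintro s t ⟨n, hs, ht, hw⟩ r t' ht'
    have hlen := FM.length_of_rel ht'
    have hbound := t'.2.2
    obtain ⟨n, rfl⟩ : ∃ m, n = m + 1 := Nat.exists_eq_succ_of_ne_zero (by omega)
    obtain ⟨x', hx', hw'⟩ := hw.2.2 r _ (FM.rel_KEnd_of_rel ht')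
    obtain ⟨s', hs', rfl⟩ := FM.exists_rel_of_rel_KEnd (by omega) hx'
    exact ⟨s', hs', n, by rw [FM.length_of_rel hs']; omega, by omega, hw'⟩

theorem exists_isPosBisimRel_FM_iff_pmWin :
    (∃ E, (FM V k A a).toKripke.IsPosBisimRel (FM V k A a).pt (FM V k B b).toKripke
      (FM V k B b).pt E) ↔ PMWin A B k a b :=
  ⟨fun ⟨_, hE⟩ => hE.pmWin hE.pt (Nat.zero_add k).le (Nat.zero_add k).le,
    fun h => ⟨_, h.isPosBisimRel⟩⟩

end Game

theorem positive_bisimulation_iff_positive_bisimulation_game_general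
    (V : MVocab) {α β : Type} (A : Kripke V α) (a : α) (B : Kripke V β) (b : β) (k : ℕ) :
    PosBisimM V k (FM V k A a) (FM V k B b) ↔ PMWin A B k a b :=
  (posBisimM_iff_exists_isPosBisimRel (FM.isSyncTree V k A a) (FM.isSyncTree V k B b)).trans
    exists_isPosBisimRel_FM_iff_pmWin

/-- there exists a positive bisimulation from `F_k(A,a)` to `F_k(B,b)` in
`EM(M_k)` if, and only if, Duplicator has a winning strategy in the positive `k`-round
bisimulation game from `(A,a)` to `(B,b)`. -/
theorem positive_bisimulation_iff_positive_bisimulation_game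
    (V : MVocab) [Finite V.P] [Finite V.R] {α β : Type}
    (A : Kripke V α) (a : α) (B : Kripke V β) (b : β) (k : ℕ) :
    PosBisimM V k (FM V k A a) (FM V k B b) ↔ PMWin A B k a b :=
  positive_bisimulation_iff_positive_bisimulation_game_general V A a B b k
end

section
/- In any arboreal category, if there exists a positive back-and-forth system from X to Y, then there exists a strong positive back-and-forth system from X to Y. -/
open CategoryTheory CategoryTheory.Limits

universe v u

variable {C : Type u} [Category.{v} C]

/-- A stable proper factorisation system `(Q, M)` on a category `C`:
every morphism factors as a quotient followed by an embedding, the two classes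
determine each other by lifting properties, quotients are epimorphisms, embeddings
are monomorphisms, and pullbacks of quotients along embeddings exist and are
quotients. -/
structure PreArboreal (C : Type u) [Category.{v} C] : Type (max u (v + 1)) where
  /-- The class of quotients. -/
  IsQ : MorphismProperty C
  /-- The class of embeddings. -/
  IsM : MorphismProperty C
  factor : ∀ {X Y : C} (f : X ⟶ Y),
    ∃ (Z : C) (e : X ⟶ Z) (m : Z ⟶ Y), IsQ e ∧ IsM m ∧ e ≫ m = f
  q_llp : ∀ {X Y : C} (f : X ⟶ Y),
    IsQ f ↔ ∀ {X' Y' : C} (g : X' ⟶ Y'), IsM g → HasLiftingProperty f g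
  m_rlp : ∀ {X Y : C} (g : X ⟶ Y),
    IsM g ↔ ∀ {X' Y' : C} (f : X' ⟶ Y'), IsQ f → HasLiftingProperty f g
  q_epi : ∀ {X Y : C} (f : X ⟶ Y), IsQ f → Epi f
  m_mono : ∀ {X Y : C} (f : X ⟶ Y), IsM f → Mono f
  stable : ∀ {X Y Z : C} (e : X ⟶ Z) (m : Y ⟶ Z), IsQ e → IsM m →
    ∃ (W : C) (p : W ⟶ X) (q : W ⟶ Y), IsPullback p q e m ∧ IsQ q

namespace PreArboreal

/-- A representative of an `M`-subobject of `X`: an embedding into `X`. -/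
structure MSub (A : PreArboreal C) (X : C) : Type (max u v) where
  dom : C
  hom : dom ⟶ X
  emb : A.IsM hom

/-- The preorder on `M`-subobjects of `X`. -/
def mle (A : PreArboreal C) {X : C} (f g : A.MSub X) : Prop :=
  ∃ h : f.dom ⟶ g.dom, h ≫ g.hom = f.hom

/-- Equivalence of `M`-subobjects (they represent the same element of the poset
`ΣM X`). -/
def mequiv (A : PreArboreal C) {X : C} (f g : A.MSub X) : Prop :=
  A.mle f g ∧ A.mle g f

/-- A path: an object whose poset of `M`-subobjects is a finite linear order. -/
def IsPathObj (A : PreArboreal C) (P : C) : Prop :=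
  (∀ f g : A.MSub P, A.mle f g ∨ A.mle g f) ∧
  ∃ (n : ℕ) (l : Fin n → A.MSub P), ∀ f : A.MSub P, ∃ i, A.mequiv f (l i)

/-- A path embedding into `X`, i.e. an element of the tree `P X`. -/
structure PathsOver (A : PreArboreal C) (X : C) : Type (max u v) where
  sub : A.MSub X
  path : IsPathObj A sub.dom

instance (A : PreArboreal C) (X : C) : Category (PathsOver A X) where
  Hom p q := {h : p.sub.dom ⟶ q.sub.dom // h ≫ q.sub.hom = p.sub.hom}
  id p := ⟨𝟙 _, Category.id_comp _⟩
  comp f g := ⟨f.1 ≫ g.1, by rw [Category.assoc, g.2, f.2]⟩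
  id_comp f := Subtype.ext (Category.id_comp _)
  comp_id f := Subtype.ext (Category.comp_id _)
  assoc f g h := Subtype.ext (Category.assoc _ _ _)

/-- The tree-indexed diagram of the paths embedding into `X`. -/
def pathsDiagram (A : PreArboreal C) (X : C) : PathsOver A X ⥤ C where
  obj p := p.sub.dom
  map f := f.1
  map_id _ := rfl
  map_comp _ _ := rfl

/-- The canonical cocone over the diagram of paths embedding into `X`, with vertex
`X`. -/
def pathsCocone (A : PreArboreal C) (X : C) : Cocone (pathsDiagram A X) where
  pt := X
  ι :=
    { app := fun p => p.sub.hom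
      naturality := fun p q f => by
        show f.1 ≫ q.sub.hom = p.sub.hom ≫ 𝟙 X
        rw [Category.comp_id, f.2] }

/-- The order on the tree `P X` of path embeddings into `X` (on representatives). -/
def ple (A : PreArboreal C) {X : C} (p q : PathsOver A X) : Prop := A.mle p.sub q.sub

/-- The strict order on `P X`. -/
def plt (A : PreArboreal C) {X : C} (p q : PathsOver A X) : Prop :=
  A.ple p q ∧ ¬ A.ple q p

/-- The covering relation `⋖` of the tree `P X`. -/
def pcov (A : PreArboreal C) {X : C} (p q : PathsOver A X) : Prop :=
  A.plt p q ∧ ∀ z : PathsOver A X, ¬ (A.plt p z ∧ A.plt z q)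

/-- The root `⊥_X` of the tree `P X` (as a predicate on representatives). -/
def pRoot (A : PreArboreal C) {X : C} (p : PathsOver A X) : Prop :=
  ∀ q : PathsOver A X, A.ple p q

end PreArboreal

/-- An arboreal category: a category with a stable proper factorisation system such
that coproducts of paths exist and paths are connected, quotients between paths satisfy
the 2-out-of-3 property, and every object is the colimit of the paths embedding into
it. -/
structure Arboreal (C : Type u) [Category.{v} C] extends PreArboreal C where
  pathCoproducts : ∀ (ι : Type v) (F : ι → C),
    (∀ i, toPreArboreal.IsPathObj (F i)) → HasCoproduct F
  pathConnected : ∀ P : C, toPreArboreal.IsPathObj P →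
    ∀ (ι : Type v) (F : ι → C), Nonempty ι → (∀ i, toPreArboreal.IsPathObj (F i)) →
      ∀ (c : Cofan F), IsColimit c → ∀ g : P ⟶ c.pt,
        ∃ (i : ι) (g' : P ⟶ F i), g' ≫ c.inj i = g
  twoOfThree : ∀ {P P' P'' : C}, toPreArboreal.IsPathObj P →
    toPreArboreal.IsPathObj P' → toPreArboreal.IsPathObj P'' →
    ∀ (f : P ⟶ P') (g : P' ⟶ P''),
      (toPreArboreal.IsQ f → toPreArboreal.IsQ g → toPreArboreal.IsQ (f ≫ g)) ∧
      (toPreArboreal.IsQ f → toPreArboreal.IsQ (f ≫ g) → toPreArboreal.IsQ g) ∧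
      (toPreArboreal.IsQ g → toPreArboreal.IsQ (f ≫ g) → toPreArboreal.IsQ f)
  pathGenerated : ∀ X : C,
    Nonempty (IsColimit (PreArboreal.pathsCocone toPreArboreal X))

namespace PreArboreal

/-- There is a quotient between the domains of the path embeddings `m` and `n`
(the pairs `⟨m, n⟩` of Definition 7.3). -/
def QuotPair (A : PreArboreal C) {X Y : C}
    (m : PathsOver A X) (n : PathsOver A Y) : Prop :=
  ∃ e : m.sub.dom ⟶ n.sub.dom, A.IsQ e

/-- A positive back-and-forth system from `X` to `Y`: a set `B` of pairs `⟨m, n⟩`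
(each admitting a quotient `dom m ↠ dom n`) containing the pair of roots and
satisfying the forth and back conditions along the covering relations. -/
def IsPBFS (A : PreArboreal C) (X Y : C)
    (B : PathsOver A X → PathsOver A Y → Prop) : Prop :=
  (∀ m n, B m n → A.QuotPair m n) ∧
  (∃ m n, A.pRoot m ∧ A.pRoot n ∧ B m n) ∧
  (∀ m n, B m n → ∀ m', A.pcov m m' → ∃ n', A.pcov n n' ∧ B m' n') ∧
  (∀ m n, B m n → ∀ n', A.pcov n n' → ∃ m', A.pcov m m' ∧ B m' n')

/-- A positive back-and-forth system is strong if it is downward closed along the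
covering relations. -/
def IsStrong (A : PreArboreal C) {X Y : C}
    (B : PathsOver A X → PathsOver A Y → Prop) : Prop :=
  ∀ m n, B m n → ∀ m' n', A.pcov m' m → A.pcov n' n → B m' n'

end PreArboreal

/-!
Keep only those pairs of a positive back-and-forth system `B` that are reached from the pair of
roots by simultaneous covering steps inside `B`. Back and forth survive this restriction, and
since an element of the tree `P X` has at most one predecessor, the predecessors of a reached pair
are the pair it was reached from.

Path embeddings are handled through representatives, so predecessors are only unique up to
equivalence. `B` is therefore first closed under equivalence, which preserves its defining
conditions because equivalent path embeddings have isomorphic domains.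
-/

namespace BackAndForth

variable {α β : Type*} [Preorder α] [Preorder β] {B : α → β → Prop}

theorem antisymmRel_of_covBy_of_isChain_Iic {a a' c : α} (hc : IsChain (· ≤ ·) (Set.Iic c))
    (h : a ⋖ c) (h' : a' ⋖ c) : AntisymmRel (· ≤ ·) a a' := by
  rcases hc.total h.le h'.le with hle | hle
  · exact ⟨hle, not_lt_iff_le_imp_ge.1 (fun hlt => h.2 hlt h'.lt) hle⟩
  · exact ⟨not_lt_iff_le_imp_ge.1 (fun hlt => h'.2 hlt h.lt) hle, hle⟩

/-- A back-and-forth system between two preorders: a relation that contains a pair of least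
elements and can be extended along covers on either side. The condition that related elements
admit a quotient is kept separate. -/
structure IsBackAndForth (B : α → β → Prop) : Prop where
  exists_isBot : ∃ a b, IsBot a ∧ IsBot b ∧ B a b
  forth : ∀ a b, B a b → ∀ a', a ⋖ a' → ∃ b', b ⋖ b' ∧ B a' b'
  back : ∀ a b, B a b → ∀ b', b ⋖ b' → ∃ a', a ⋖ a' ∧ B a' b'

/-- Closure of a relation under simultaneous passage to predecessors; this is what makes a
back-and-forth system strong. -/
def IsCovByClosed (B : α → β → Prop) : Prop :=
  ∀ a b, B a b → ∀ a' b', a' ⋖ a → b' ⋖ b → B a' b'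

/-- Invariance of a relation under the equivalences `a ≤ a' ≤ a` of the two preorders, i.e. the
relation descends to the associated posets. -/
def RespectsAntisymmRel (B : α → β → Prop) : Prop :=
  ∀ ⦃a a' b b'⦄, AntisymmRel (· ≤ ·) a a' → AntisymmRel (· ≤ ·) b b' → B a b → B a' b'

/-- The smallest relation containing `B` that respects the equivalences of the two preorders. -/
def saturation (B : α → β → Prop) (a : α) (b : β) : Prop :=
  ∃ a₀ b₀, AntisymmRel (· ≤ ·) a₀ a ∧ AntisymmRel (· ≤ ·) b₀ b ∧ B a₀ b₀

theorem le_saturation (B : α → β → Prop) : B ≤ saturation B :=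
  fun a b h => ⟨a, b, .rfl, .rfl, h⟩

theorem respectsAntisymmRel_saturation (B : α → β → Prop) :
    RespectsAntisymmRel (saturation B) := by
  rintro a a' b b' ha hb ⟨a₀, b₀, ha₀, hb₀, h⟩
  exact ⟨a₀, b₀, ha₀.trans ha, hb₀.trans hb, h⟩

theorem saturation_le {R : α → β → Prop} (hR : RespectsAntisymmRel R) (hBR : B ≤ R) :
    saturation B ≤ R := by
  rintro a b ⟨a₀, b₀, ha, hb, h⟩
  exact hR ha hb (hBR a₀ b₀ h)

theorem isBackAndForth_saturation (hB : IsBackAndForth B) : IsBackAndForth (saturation B) where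
  exists_isBot := by
    obtain ⟨a, b, ha, hb, h⟩ := hB.exists_isBot
    exact ⟨a, b, ha, hb, le_saturation B a b h⟩
  forth := by
    rintro a b ⟨a₀, b₀, ha, hb, h⟩ a' haa'
    obtain ⟨b', hbb', h'⟩ := hB.forth a₀ b₀ h a' (ha.trans_covBy haa')
    exact ⟨b', hb.symm.trans_covBy hbb', le_saturation B a' b' h'⟩
  back := by
    rintro a b ⟨a₀, b₀, ha, hb, h⟩ b' hbb'
    obtain ⟨a', haa', h'⟩ := hB.back a₀ b₀ h b' (hb.trans_covBy hbb')
    exact ⟨a', ha.symm.trans_covBy haa', le_saturation B a' b' h'⟩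

/-- The pairs reached from a pair of least elements by simultaneous covering steps, staying in `B`
throughout. -/
inductive Reachable (B : α → β → Prop) : α → β → Prop
  | bot {a b} : IsBot a → IsBot b → B a b → Reachable B a b
  | step {a b a' b'} : Reachable B a b → a ⋖ a' → b ⋖ b' → B a' b' → Reachable B a' b'

namespace Reachable

theorem le (B : α → β → Prop) : Reachable B ≤ B := by
  rintro a b (⟨-, -, h⟩ | ⟨-, -, -, h⟩) <;> exact h

theorem respectsAntisymmRel (hB : RespectsAntisymmRel B) : RespectsAntisymmRel (Reachable B) := by
  intro a a' b b' haa' hbb' h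
  cases h with
  | bot ha hb h =>
    exact .bot (fun x => (ha x).trans' haa'.ge) (fun y => (hb y).trans' hbb'.ge) (hB haa' hbb' h)
  | step h₀ ha hb h =>
    exact .step h₀ (ha.trans_antisymmRel haa') (hb.trans_antisymmRel hbb') (hB haa' hbb' h)

theorem isBackAndForth (hB : IsBackAndForth B) : IsBackAndForth (Reachable B) where
  exists_isBot := by
    obtain ⟨a, b, ha, hb, h⟩ := hB.exists_isBot
    exact ⟨a, b, ha, hb, .bot ha hb h⟩
  forth a b h a' haa' := by
    obtain ⟨b', hbb', h'⟩ := hB.forth a b (le B a b h) a' haa'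
    exact ⟨b', hbb', .step h haa' hbb' h'⟩
  back a b h b' hbb' := by
    obtain ⟨a', haa', h'⟩ := hB.back a b (le B a b h) b' hbb'
    exact ⟨a', haa', .step h haa' hbb' h'⟩

theorem isCovByClosed (hB : RespectsAntisymmRel B)
    (hα : ∀ a : α, IsChain (· ≤ ·) (Set.Iic a)) (hβ : ∀ b : β, IsChain (· ≤ ·) (Set.Iic b)) :
    IsCovByClosed (Reachable B) := by
  intro a b h a' b' ha' hb'
  cases h with
  | bot ha _ _ => exact absurd ha'.lt (ha a').not_gt
  | step h₀ ha₀ hb₀ _ =>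
    exact respectsAntisymmRel hB (antisymmRel_of_covBy_of_isChain_Iic (hα a) ha₀ ha')
      (antisymmRel_of_covBy_of_isChain_Iic (hβ b) hb₀ hb') h₀

end Reachable

theorem IsBackAndForth.exists_isCovByClosed {R : α → β → Prop} (hB : IsBackAndForth B)
    (hR : RespectsAntisymmRel R) (hBR : B ≤ R)
    (hα : ∀ a : α, IsChain (· ≤ ·) (Set.Iic a)) (hβ : ∀ b : β, IsChain (· ≤ ·) (Set.Iic b)) :
    ∃ B' ≤ R, IsBackAndForth B' ∧ IsCovByClosed B' :=
  ⟨Reachable (saturation B), (Reachable.le _).trans (saturation_le hR hBR),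
    Reachable.isBackAndForth (isBackAndForth_saturation hB),
    Reachable.isCovByClosed (respectsAntisymmRel_saturation B) hα hβ⟩

end BackAndForth

namespace PreArboreal

open BackAndForth

variable {A : PreArboreal C} {X Y : C}

theorem isQ_eq_llp (A : PreArboreal C) : A.IsQ = A.IsM.llp := by
  ext P R e
  exact A.q_llp e

theorem isM_eq_rlp (A : PreArboreal C) : A.IsM = A.IsQ.rlp := by
  ext P R m
  exact A.m_rlp m

instance isQ_respectsIso (A : PreArboreal C) : A.IsQ.RespectsIso := by
  rw [isQ_eq_llp]
  infer_instance

theorem isM_of_comp {P R S : C} {f : P ⟶ R} {g : R ⟶ S} (hg : A.IsM g) (hfg : A.IsM (f ≫ g)) :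
    A.IsM f := by
  have hmono : Mono g := A.m_mono g hg
  rw [isM_eq_rlp] at hfg ⊢
  exact MorphismProperty.of_postcomp (W' := .monomorphisms C) A.IsQ.rlp f g hmono hfg

/-- The order of the tree `P X`, as a preorder on representatives. It is not a global instance
because it would induce a second category structure on `PathsOver A X`. -/
abbrev pathsPreorder (A : PreArboreal C) (X : C) : Preorder (PathsOver A X) where
  le := A.ple
  lt := A.plt
  le_refl p := ⟨𝟙 p.sub.dom, Category.id_comp p.sub.hom⟩
  le_trans := by
    rintro p q r ⟨f, hf⟩ ⟨g, hg⟩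
    exact ⟨f ≫ g, by rw [Category.assoc, hg, hf]⟩
  lt_iff_le_not_ge _ _ := Iff.rfl

attribute [local instance] pathsPreorder

theorem pcov_iff_covBy {p q : PathsOver A X} : A.pcov p q ↔ p ⋖ q :=
  and_congr_right' (forall_congr' fun _ => not_and)

theorem isPBFS_iff {B : PathsOver A X → PathsOver A Y → Prop} :
    A.IsPBFS X Y B ↔ B ≤ A.QuotPair ∧ IsBackAndForth B := by
  simp only [IsPBFS, pcov_iff_covBy]
  exact and_congr_right' ⟨fun ⟨hbot, hforth, hback⟩ => ⟨hbot, hforth, hback⟩,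
    fun hB => ⟨hB.exists_isBot, hB.forth, hB.back⟩⟩

theorem isStrong_iff_isCovByClosed {B : PathsOver A X → PathsOver A Y → Prop} :
    A.IsStrong B ↔ IsCovByClosed B := by
  simp only [IsStrong, IsCovByClosed, pcov_iff_covBy]

theorem isChain_Iic (q : PathsOver A X) : IsChain (· ≤ ·) (Set.Iic q) := by
  rintro p ⟨f, hf⟩ p' ⟨f', hf'⟩ -
  have hfM : A.IsM f := isM_of_comp q.sub.emb (hf ▸ p.sub.emb)
  have hfM' : A.IsM f' := isM_of_comp q.sub.emb (hf' ▸ p'.sub.emb)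
  refine (q.path.1 ⟨_, f, hfM⟩ ⟨_, f', hfM'⟩).imp ?_ ?_
  · rintro ⟨k, hk : k ≫ f' = f⟩
    exact ⟨k, by rw [← hf', ← Category.assoc, hk, hf]⟩
  · rintro ⟨k, hk : k ≫ f = f'⟩
    exact ⟨k, by rw [← hf, ← Category.assoc, hk, hf']⟩

theorem nonempty_iso_of_antisymmRel {p q : PathsOver A X} (h : AntisymmRel (· ≤ ·) p q) :
    Nonempty (p.sub.dom ≅ q.sub.dom) := by
  obtain ⟨⟨f, hf⟩, ⟨g, hg⟩⟩ := h
  have : Mono p.sub.hom := A.m_mono _ p.sub.emb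
  have : Mono q.sub.hom := A.m_mono _ q.sub.emb
  exact ⟨f, g, by rw [← cancel_mono p.sub.hom, Category.assoc, hg, hf, Category.id_comp],
    by rw [← cancel_mono q.sub.hom, Category.assoc, hf, hg, Category.id_comp]⟩

theorem respectsAntisymmRel_quotPair :
    RespectsAntisymmRel (A.QuotPair : PathsOver A X → PathsOver A Y → Prop) := by
  rintro m m' n n' hm hn ⟨e, he⟩
  obtain ⟨i⟩ := nonempty_iso_of_antisymmRel hm
  obtain ⟨j⟩ := nonempty_iso_of_antisymmRel hn
  exact ⟨i.inv ≫ e ≫ j.hom,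
    (A.IsQ.cancel_left_of_respectsIso _ _).2 ((A.IsQ.cancel_right_of_respectsIso _ _).2 he)⟩

end PreArboreal

attribute [local instance] PreArboreal.pathsPreorder in
theorem strong_positive_back_and_forth_system_general
    {C : Type u} [Category.{v} C] (A : PreArboreal C) (X Y : C)
    (h : ∃ B, PreArboreal.IsPBFS A X Y B) :
    ∃ B, PreArboreal.IsPBFS A X Y B ∧ PreArboreal.IsStrong A B := by
  obtain ⟨B, hB⟩ := h
  obtain ⟨hquot, hBF⟩ := PreArboreal.isPBFS_iff.1 hB
  obtain ⟨B', hquot', hBF', hclosed⟩ := hBF.exists_isCovByClosed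
    PreArboreal.respectsAntisymmRel_quotPair hquot PreArboreal.isChain_Iic PreArboreal.isChain_Iic
  exact ⟨B', PreArboreal.isPBFS_iff.2 ⟨hquot', hBF'⟩,
    PreArboreal.isStrong_iff_isCovByClosed.2 hclosed⟩

/-- in any arboreal category, if there exists a positive back-and-forth
system from `X` to `Y`, then there exists a strong positive back-and-forth system from
`X` to `Y`. -/
theorem strong_positive_back_and_forth_system
    {C : Type u} [Category.{v} C] (A : Arboreal C) (X Y : C)
    (h : ∃ B, PreArboreal.IsPBFS A.toPreArboreal X Y B) :
    ∃ B, PreArboreal.IsPBFS A.toPreArboreal X Y B ∧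
      PreArboreal.IsStrong A.toPreArboreal B :=
  strong_positive_back_and_forth_system_general A.toPreArboreal X Y h
end
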